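/- arXiv:2412.08256 — 9 statements merged into one kernel-verified Lean document; each statement's English description precedes it below -/
import Mathlib

section
/- Assume U is nonempty and G has a complete matching on U. Then the largest integer k with 0 ≤ k ≤ |V| such that G is k-CM on U equals min over nonempty U' ⊆ U of (|N_G(U')| − |U'|). -/
open Finset
open scoped Classical

/-! Keeping only `|V| - k` vertices of `V` destroys at most `k` neighbours of a set `U'`, and some
choice destroys exactly `min k |N(U')|`. So by Hall's theorem `G` is `k`-CM if and only if every
nonempty `U'` has at least `|U'| + k` neighbours, and such `k` form an initial segment of `ℕ` whose
top is the least surplus `|N(U')| - |U'|`. -/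

theorem forall_le_card_inter_iff_add_le_card {α : Type*} [Fintype α] {k m : ℕ}
    (hk : k ≤ Fintype.card α) (hm : 0 < m) (t : Finset α) :
    (∀ s : Finset α, #s + k = Fintype.card α → m ≤ #(t ∩ s)) ↔ m + k ≤ #t := by
  constructor
  · intro h
    have ht : #tᶜ + #t = Fintype.card α := card_compl_add_card t
    obtain hle | hlt := le_or_gt (#tᶜ) (Fintype.card α - k)
    · obtain ⟨s, hts, -, hs⟩ := exists_subsuperset_card_eq (subset_univ tᶜ) hle (by simp)
      have hunion : t ∪ s = univ := codisjoint_iff.mp (codisjoint_iff_compl_le_right.mpr hts)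
      have hcard := card_union_add_card_inter t s
      rw [hunion, card_univ] at hcard
      have hm_le : m ≤ #(t ∩ s) := h s (by lia)
      lia
    · obtain ⟨s, hst, hs⟩ := exists_subset_card_eq hlt.le
      have hinter : t ∩ s = ∅ :=
        disjoint_iff_inter_eq_empty.mp (subset_compl_iff_disjoint_left.mp hst)
      have hm_le : m ≤ #(t ∩ s) := h s (by lia)
      rw [hinter, card_empty] at hm_le
      lia
  · intro h s hs
    have hcard := card_union_add_card_inter t s
    have hunion_le := card_le_univ (t ∪ s)
    lia

section Bipartite

variable {U V : Type*} [Fintype V] {E : U → V → Prop} {k : ℕ}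

/-- The neighbourhood `N_G(A)` of a set `A ⊆ U` in the bipartite graph with edge relation `E`. -/
noncomputable def neighborFinset (E : U → V → Prop) (A : Finset U) : Finset V :=
  {v | ∃ u ∈ A, E u v}

/-- The bipartite graph with edge relation `E` is `k`-CM on `U`: each set of `|V| - k` vertices
of `V` contains the image of a complete matching on `U`. For `k > |V|` this holds vacuously. -/
def IsKCM (E : U → V → Prop) (k : ℕ) : Prop :=
  ∀ V' : Finset V, #V' + k = Fintype.card V →
    ∃ f : U → V, Function.Injective f ∧ ∀ u : U, E u (f u) ∧ f u ∈ V'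

/-- The minimum of `|N_G(A)| - |A|` over nonempty `A ⊆ U`. The subtraction is truncated, hence
faithful only under Hall's condition, and the value is `0` when `U` is empty. -/
noncomputable def minSurplus (E : U → V → Prop) : ℕ :=
  sInf {n : ℕ | ∃ A : Finset U, A.Nonempty ∧ n = #(neighborFinset E A) - #A}

theorem forall_card_le_neighborFinset_iff_exists_injective :
    (∀ A, #A ≤ #(neighborFinset E A)) ↔
      ∃ f : U → V, Function.Injective f ∧ ∀ u, E u (f u) := by
  rw [← Fintype.all_card_le_filter_rel_iff_exists_injective]
  simp only [neighborFinset]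

theorem neighborFinset_and_mem (W : Finset V) (A : Finset U) :
    neighborFinset (fun u v => E u v ∧ v ∈ W) A = neighborFinset E A ∩ W := by
  ext v
  simp only [neighborFinset, mem_filter, mem_univ, true_and, mem_inter, ← and_assoc,
    exists_and_right]

theorem isKCM_iff_forall_card_add_le (hk : k ≤ Fintype.card V) :
    IsKCM E k ↔ ∀ A : Finset U, A.Nonempty → #A + k ≤ #(neighborFinset E A) :=
  calc
    IsKCM E k ↔ ∀ V' : Finset V, #V' + k = Fintype.card V →
        ∀ A, #A ≤ #(neighborFinset E A ∩ V') := by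
      simp only [IsKCM, ← neighborFinset_and_mem,
        forall_card_le_neighborFinset_iff_exists_injective]
    _ ↔ ∀ A : Finset U, A.Nonempty → ∀ V' : Finset V, #V' + k = Fintype.card V →
        #A ≤ #(neighborFinset E A ∩ V') := by
      refine ⟨fun h A _ V' hV' => h V' hV' A, fun h V' hV' A => ?_⟩
      obtain rfl | hA := A.eq_empty_or_nonempty
      · simp
      · exact h A hA V' hV'
    _ ↔ ∀ A : Finset U, A.Nonempty → #A + k ≤ #(neighborFinset E A) :=
      forall₂_congr fun _ hA => forall_le_card_inter_iff_add_le_card hk hA.card_pos _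

theorem le_card_and_isKCM_iff_forall_card_add_le [Nonempty U] :
    k ≤ Fintype.card V ∧ IsKCM E k ↔
      ∀ A : Finset U, A.Nonempty → #A + k ≤ #(neighborFinset E A) := by
  refine ⟨fun ⟨hk, h⟩ => (isKCM_iff_forall_card_add_le hk).mp h, fun h => ?_⟩
  obtain ⟨u⟩ := ‹Nonempty U›
  have hk : k ≤ Fintype.card V := calc
    k ≤ #{u} + k := Nat.le_add_left ..
    _ ≤ #(neighborFinset E {u}) := h {u} (singleton_nonempty u)
    _ ≤ Fintype.card V := card_le_univ _
  exact ⟨hk, (isKCM_iff_forall_card_add_le hk).mpr h⟩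

theorem le_minSurplus_iff_forall_card_add_le [Nonempty U] (hall : ∀ A, #A ≤ #(neighborFinset E A)) :
    k ≤ minSurplus E ↔ ∀ A : Finset U, A.Nonempty → #A + k ≤ #(neighborFinset E A) := by
  obtain ⟨u⟩ := ‹Nonempty U›
  have hne : {n | ∃ A : Finset U, A.Nonempty ∧ n = #(neighborFinset E A) - #A}.Nonempty :=
    ⟨_, {u}, singleton_nonempty u, rfl⟩
  rw [minSurplus, le_csInf_iff (OrderBot.bddBelow _) hne]
  constructor
  · intro h A hA
    have hk : k ≤ #(neighborFinset E A) - #A := h _ ⟨A, hA, rfl⟩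
    have hHall : #A ≤ #(neighborFinset E A) := hall A
    lia
  · rintro h _ ⟨A, hA, rfl⟩
    exact Nat.le_sub_of_add_le' (h A hA)

end Bipartite

/-- **Corollary 1.0.3**: if `U ≠ ∅` and `G` has a complete matching on `U`, then the
largest `k` with `0 ≤ k ≤ |V|` such that `G` is `k`-CM on `U` equals
`min_{∅ ≠ U' ⊆ U} (|N_G(U')| - |U'|)`. -/
theorem stmt_1 {U V : Type*} [Fintype U] [Fintype V]
    (E : U → V → Prop)
    (hUV : Fintype.card U ≤ Fintype.card V)
    (hU : Nonempty U)
    (hmatch : ∃ f : U → V, Function.Injective f ∧ ∀ u : U, E u (f u)) :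
    IsGreatest
      {k : ℕ | k ≤ Fintype.card V ∧
        ∀ V' : Finset V, V'.card + k = Fintype.card V →
          ∃ f : U → V, Function.Injective f ∧ ∀ u : U, E u (f u) ∧ f u ∈ V'}
      (sInf {n : ℕ | ∃ U' : Finset U, U'.Nonempty ∧
        n = (Finset.filter (fun v : V => ∃ u ∈ U', E u v) Finset.univ).card - U'.card}) := by
  have hall : ∀ A, #A ≤ #(neighborFinset E A) :=
    forall_card_le_neighborFinset_iff_exists_injective.mpr hmatch
  have hset : {k | k ≤ Fintype.card V ∧ IsKCM E k} = Set.Iic (minSurplus E) :=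
    Set.ext fun _ => le_card_and_isKCM_iff_forall_card_add_le.trans
      (le_minSurplus_iff_forall_card_add_le hall).symm
  change IsGreatest {k | k ≤ Fintype.card V ∧ IsKCM E k} (minSurplus E)
  rw [hset]
  exact isGreatest_Iic
end

section
/- If every s–t path of D of length at most d has at least two internal vertices, then the polytope P(D, d) is full-dimensional, i.e., its affine span is all of ℝ^V. -/
open Finset
open scoped Classical

noncomputable section

/-- Vertex type of the digraph `D = (V ∪ {s,t}, A)`: `Sum.inl v` is an internal vertex,
`Sum.inr false` is the source `s`, `Sum.inr true` is the destination `t`. -/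
abbrev Vtx (V : Type*) := V ⊕ Bool

/-- The sequence of vertices `s, v₁, …, vₙ, t` of an `s`-`t` walk whose list of internal
vertices is `L`. -/
def pathVerts {V : Type*} (L : List V) : List (Vtx V) :=
  Sum.inr false :: (L.map Sum.inl ++ [Sum.inr true])

/-- `L` is the list of internal vertices of a (simple) `s`-`t` path of the digraph with
arc relation `A`. -/
def IsSTPath {V : Type*} (A : Vtx V → Vtx V → Prop) (L : List V) : Prop :=
  L.Nodup ∧ (pathVerts L).Chain' A

/-- The total length of the `s`-`t` path with internal-vertex list `L`, for arc
lengths `l`. -/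
def pathLen {V : Type*} (l : Vtx V → Vtx V → ℝ) (L : List V) : ℝ :=
  (List.zipWith l (pathVerts L) (pathVerts L).tail).sum

/-- Membership in `𝒫`: `L` is the internal-vertex list of an `s`-`t` path of length at
most `d`. -/
def memP {V : Type*} (A : Vtx V → Vtx V → Prop) (l : Vtx V → Vtx V → ℝ) (d : ℝ)
    (L : List V) : Prop :=
  IsSTPath A L ∧ pathLen l L ≤ d

/-- The integer points of `P(D,d)`: vectors `x ∈ {0,1}^V` with
`Σ_{v internal vertex of P} x_v ≥ 1` for every path `P ∈ 𝒫`. -/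
def blockerSet {V : Type*} [Fintype V] (A : Vtx V → Vtx V → Prop)
    (l : Vtx V → Vtx V → ℝ) (d : ℝ) : Set (V → ℝ) :=
  {x | (∀ v, x v = 0 ∨ x v = 1) ∧
    ∀ L : List V, memP A l d L → 1 ≤ ∑ v ∈ L.toFinset, x v}

/-!
Deleting one vertex from `V` still leaves a vertex on every path that has two internal vertices.
So the all-ones vector and its differences with the standard basis vectors all lie in `P(D, d)`,
and these points affinely span `ℝ^V`.
-/

/-- The `0/1` vectors on `V` that cover the set family `𝓕`: the incidence vectors of those subsets
of `V` that meet every member of `𝓕`. -/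
def coverVectors {V : Type*} (R : Type*) [Semiring R] [LE R] (𝓕 : Set (Finset V)) : Set (V → R) :=
  {x | (∀ v, x v = 0 ∨ x v = 1) ∧ ∀ S ∈ 𝓕, 1 ≤ ∑ v ∈ S, x v}

theorem affineSpan_eq_top_of_forall_sub_mem {R M ι : Type*} [Ring R] [AddCommGroup M] [Module R M]
    {s : Set M} {b : ι → M} {p : M} (hb : Submodule.span R (Set.range b) = ⊤) (hp : p ∈ s)
    (hsub : ∀ i, p - b i ∈ s) : affineSpan R s = ⊤ := by
  rw [← AffineSubspace.direction_eq_top_iff_of_nonempty ⟨p, subset_affineSpan R s hp⟩,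
    direction_affineSpan, vectorSpan_eq_span_vsub_set_left R hp, eq_top_iff, ← hb]
  apply Submodule.span_mono
  rintro _ ⟨i, rfl⟩
  exact ⟨p - b i, hsub i, sub_sub_cancel p (b i)⟩

section CoverVectors

variable {R V : Type*} [Ring R] [PartialOrder R] [IsStrictOrderedRing R] {𝓕 : Set (Finset V)}

theorem indicator_mem_coverVectors_iff {T : Set V} :
    T.indicator 1 ∈ coverVectors R 𝓕 ↔ ∀ S ∈ 𝓕, ∃ v ∈ S, v ∈ T := by
  have zero_or_one (v : V) : T.indicator (1 : V → R) v = 0 ∨ T.indicator (1 : V → R) v = 1 :=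
    Set.indicator_eq_zero_or_self T 1 v
  have one_le_sum_iff (S : Finset V) :
      1 ≤ ∑ v ∈ S, T.indicator (1 : V → R) v ↔ ∃ v ∈ S, v ∈ T := by
    simp only [Set.indicator_apply, Pi.one_apply, sum_boole, Nat.one_le_cast, one_le_card,
      filter_nonempty_iff]
  simp only [coverVectors, Set.mem_ofPred_eq, zero_or_one, one_le_sum_iff, implies_true, true_and]

theorem one_mem_coverVectors (h𝓕 : ∀ S ∈ 𝓕, S.Nonempty) : 1 ∈ coverVectors R 𝓕 := by
  rw [← Set.indicator_univ (1 : V → R), indicator_mem_coverVectors_iff]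
  exact fun S hS => (h𝓕 S hS).imp fun v hv => ⟨hv, Set.mem_univ v⟩

theorem one_sub_single_mem_coverVectors (h𝓕 : ∀ S ∈ 𝓕, S.Nontrivial) (v : V) :
    1 - Pi.single v 1 ∈ coverVectors R 𝓕 := by
  have one_sub_single_eq : 1 - Pi.single v 1 = ({v}ᶜ : Set V).indicator (1 : V → R) := by
    rw [Set.indicator_compl, Set.indicator_singleton, Pi.one_apply]
  rw [one_sub_single_eq, indicator_mem_coverVectors_iff]
  exact fun S hS => (h𝓕 S hS).exists_ne v

theorem stmt_6_general [Finite V] (h𝓕 : ∀ S ∈ 𝓕, S.Nontrivial) :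
    affineSpan R (convexHull R (coverVectors R 𝓕)) = ⊤ := by
  rw [affineSpan_convexHull]
  refine affineSpan_eq_top_of_forall_sub_mem (Pi.basisFun R V).span_eq
    (one_mem_coverVectors fun S hS => (h𝓕 S hS).nonempty) fun v => ?_
  rw [Pi.basisFun_apply]
  exact one_sub_single_mem_coverVectors h𝓕 v

end CoverVectors

theorem blockerSet_eq_coverVectors {V : Type*} [Fintype V] (A : Vtx V → Vtx V → Prop)
    (l : Vtx V → Vtx V → ℝ) (d : ℝ) :
    blockerSet A l d = coverVectors ℝ (List.toFinset '' {L | memP A l d L}) := by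
  simp only [blockerSet, coverVectors, Set.forall_mem_image, Set.mem_ofPred_eq]

theorem IsSTPath.toFinset_nontrivial {V : Type*} {A : Vtx V → Vtx V → Prop} {L : List V}
    (hL : IsSTPath A L) (h2 : 2 ≤ L.length) : L.toFinset.Nontrivial := by
  rwa [← one_lt_card_iff_nontrivial, List.toFinset_card_of_nodup hL.1]

/-- **Theorem 3.1.1**: if every `s`-`t` path of `D` of length at most `d` has at least
two internal vertices, then `P(D,d)` is full-dimensional. -/
theorem stmt_6 {V : Type*} [Fintype V]
    (A : Vtx V → Vtx V → Prop) (l : Vtx V → Vtx V → ℝ) (d : ℝ)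
    (hl : ∀ x y, 0 ≤ l x y) (hd : 0 < d)
    (h2 : ∀ L : List V, memP A l d L → 2 ≤ L.length) :
    affineSpan ℝ (convexHull ℝ (blockerSet A l d)) = ⊤ := by
  rw [blockerSet_eq_coverVectors]
  exact stmt_6_general (Set.forall_mem_image.2 fun L hL => hL.1.toFinset_nontrivial (h2 L hL))

end
end

section
/- The optimal value of the maximum flow blocker problem, min{ Σ_{a∈B} r(a) : B ⊆ A a feasible blocker }, equals min{ Σ_{a∈B} r(a) : U ⊆ V with s ∈ U and t ∉ U, B ⊆ δ⁺(U), and Σ_{a∈δ⁺(U)∖B} c(a) ≤ Φ }. In particular, there exists an optimal blocker B* that is contained in δ⁺(U) for some vertex set U with s ∈ U and t ∉ U such that the non-blocked arcs of the cut δ⁺(U) have total capacity at most Φ. -/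
open Finset
open scoped Classical

noncomputable section

/-- `f` is an `s`-`t` flow on the digraph with arc set `arcs` and capacities `c`:
capacity bounds on arcs, zero outside arcs, and flow conservation at every vertex
other than `s` and `t`. -/
def IsFlow {V : Type*} [Fintype V] (arcs : Finset (V × V)) (c : V × V → ℕ)
    (s t : V) (f : V × V → ℝ) : Prop :=
  (∀ a ∈ arcs, 0 ≤ f a ∧ f a ≤ (c a : ℝ)) ∧ (∀ a ∉ arcs, f a = 0) ∧
  ∀ v : V, v ≠ s → v ≠ t →
    ∑ a ∈ arcs.filter (fun a => a.2 = v), f a = ∑ a ∈ arcs.filter (fun a => a.1 = v), f a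

/-- The value of the flow `f`: net flow out of the source `s`. -/
def flowValue {V : Type*} [Fintype V] (arcs : Finset (V × V)) (s : V) (f : V × V → ℝ) : ℝ :=
  ∑ a ∈ arcs.filter (fun a => a.1 = s), f a - ∑ a ∈ arcs.filter (fun a => a.2 = s), f a

/-- `δ⁺(U)`: the arcs of `A` with tail in `U` and head outside `U`. -/
def outCut {V : Type*} (A : Finset (V × V)) (U : Finset V) : Finset (V × V) :=
  A.filter (fun a => a.1 ∈ U ∧ a.2 ∉ U)

/-- `B ⊆ A` is a feasible blocker: the maximum `s`-`t` flow value in `(V, A ∖ B)` is at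
most `Φ`, i.e. every `s`-`t` flow in `(V, A ∖ B)` has value at most `Φ`. -/
def FeasibleBlocker {V : Type*} [Fintype V] (A : Finset (V × V)) (c : V × V → ℕ)
    (s t : V) (Φ : ℕ) (B : Finset (V × V)) : Prop :=
  ∀ f : V × V → ℝ, IsFlow (A \ B) c s t f → flowValue (A \ B) s f ≤ (Φ : ℝ)

/-! By max-flow min-cut, `B` is a feasible blocker exactly when some `s`-`t` cut `δ⁺(U)` has
capacity at most `Φ` after deleting `B`. For such a `U`, only the arcs of `B` in `δ⁺(U)` matter, so
discarding the others keeps `B` feasible and does not increase its cost.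

Max-flow min-cut itself is proved without walks in the residual network. A maximum flow `f` exists
by compactness, and the source side of a minimum cut consists of the vertices to which a positive
amount can be sent from `s` on top of `f`; convexity of the capacity constraints makes this relation
transitive. -/

/-- The net outflow of every vertex (flow out minus flow in), as a linear map in the flow; a vertex
pair that is not an arc carries the value `0`. -/
def netOutflow {V R : Type*} [Fintype V] [CommRing R] : (V × V → R) →ₗ[R] (V → R) where
  toFun f v := ∑ w, f (v, w) - ∑ w, f (w, v)
  map_add' f g := by ext v; simp only [Pi.add_apply, sum_add_distrib]; ring
  map_smul' k f := by ext v; simp [← mul_sum, mul_sub]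

section NetOutflow

variable {V R : Type*} [Fintype V] [CommRing R]

lemma netOutflow_apply (f : V × V → R) (v : V) :
    netOutflow f v = ∑ w, f (v, w) - ∑ w, f (w, v) := rfl

lemma netOutflow_single [DecidableEq V] (x y : V) (b : R) :
    netOutflow (Pi.single (x, y) b) = b • (Pi.single x 1 - Pi.single y 1) := by
  ext v
  have hout : ∑ w, (Pi.single (x, y) b : V × V → R) (v, w) = if v = x then b else 0 := by
    by_cases h : v = x <;> simp [Pi.single_apply, h]
  have hin : ∑ w, (Pi.single (x, y) b : V × V → R) (w, v) = if v = y then b else 0 := by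
    by_cases h : v = y <;> simp [Pi.single_apply, h]
  rw [netOutflow_apply, hout, hin]
  simp [Pi.single_apply, mul_sub]

lemma netOutflow_update [DecidableEq V] (f : V × V → R) (x y : V) (b : R) :
    netOutflow (Function.update f (x, y) b) =
      netOutflow f + (b - f (x, y)) • (Pi.single x 1 - Pi.single y 1) := by
  rw [Pi.update_eq_sub_add_single, map_add, map_sub, netOutflow_single, netOutflow_single]
  module

lemma sum_netOutflow [DecidableEq V] (f : V × V → R) (U : Finset V) :
    ∑ v ∈ U, netOutflow f v = ∑ a ∈ U ×ˢ Uᶜ, f a - ∑ a ∈ Uᶜ ×ˢ U, f a := by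
  have hout : ∑ v ∈ U, ∑ w, f (v, w) = ∑ a ∈ U ×ˢ U, f a + ∑ a ∈ U ×ˢ Uᶜ, f a := by
    simp only [sum_product, ← sum_add_distrib, sum_add_sum_compl]
  have hin : ∑ v ∈ U, ∑ w, f (w, v) = ∑ a ∈ U ×ˢ U, f a + ∑ a ∈ Uᶜ ×ˢ U, f a := by
    simp only [sum_product_right, ← sum_add_distrib, sum_add_sum_compl]
  simp only [netOutflow_apply, sum_sub_distrib, hout, hin, add_sub_add_left_eq_sub]

end NetOutflow

/-- The `s`-`t` flows for the capacity function `u` on all vertex pairs; a vertex pair that is not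
an arc is given capacity `0`. -/
def stFlows {V R : Type*} [Fintype V] [CommRing R] [PartialOrder R] (u : V × V → R) (s t : V) :
    Set (V × V → R) :=
  {f | f ∈ Set.Icc 0 u ∧ ∀ v, v ≠ s → v ≠ t → netOutflow f v = 0}

section WeakDuality

variable {V R : Type*} [Fintype V] [DecidableEq V] [CommRing R] [PartialOrder R]
  {u f : V × V → R} {s t : V} {U : Finset V}

lemma netOutflow_source_eq_sum_cut (hf : f ∈ stFlows u s t) (hs : s ∈ U) (ht : t ∉ U) :
    netOutflow f s = ∑ a ∈ U ×ˢ Uᶜ, f a - ∑ a ∈ Uᶜ ×ˢ U, f a := by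
  rw [← sum_netOutflow, sum_eq_single_of_mem s hs]
  exact fun v hv hvs => hf.2 v hvs (ne_of_mem_of_not_mem hv ht)

lemma netOutflow_source_le_sum_cut [IsOrderedAddMonoid R] (hf : f ∈ stFlows u s t) (hs : s ∈ U)
    (ht : t ∉ U) : netOutflow f s ≤ ∑ a ∈ U ×ˢ Uᶜ, u a :=
  calc netOutflow f s = ∑ a ∈ U ×ˢ Uᶜ, f a - ∑ a ∈ Uᶜ ×ˢ U, f a :=
        netOutflow_source_eq_sum_cut hf hs ht
    _ ≤ ∑ a ∈ U ×ˢ Uᶜ, f a := sub_le_self _ (sum_nonneg fun a _ => hf.1.1 a)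
    _ ≤ ∑ a ∈ U ×ˢ Uᶜ, u a := sum_le_sum fun a _ => hf.1.2 a

end WeakDuality

/-- A positive amount can be sent from `x` to `y` on top of `f` within the capacities `u`. It plays
the part of reachability in the residual network, with the augmented function in place of a walk. -/
def Augmentable {V R : Type*} [Fintype V] [DecidableEq V] [CommRing R] [PartialOrder R]
    (u f : V × V → R) (x y : V) : Prop :=
  ∃ g ∈ Set.Icc 0 u, ∃ ε : R, 0 < ε ∧
    netOutflow g = netOutflow f + ε • (Pi.single x 1 - Pi.single y 1)

namespace Augmentable

section OrderedRing

variable {V R : Type*} [Fintype V] [DecidableEq V] [CommRing R] [PartialOrder R]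
  {u f : V × V → R} {x y : V}

lemma refl [IsStrictOrderedRing R] (hf : f ∈ Set.Icc 0 u) (x : V) : Augmentable u f x x :=
  ⟨f, hf, 1, one_pos, by simp⟩

lemma of_lt_capacity [IsOrderedAddMonoid R] (hf : f ∈ Set.Icc 0 u) (hxy : f (x, y) < u (x, y)) :
    Augmentable u f x y :=
  ⟨Function.update f (x, y) (u (x, y)),
    ⟨le_update_iff.2 ⟨(hf.1 _).trans hxy.le, fun a _ => hf.1 a⟩,
      update_le_iff.2 ⟨le_rfl, fun a _ => hf.2 a⟩⟩,
    u (x, y) - f (x, y), sub_pos.2 hxy, netOutflow_update f x y _⟩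

lemma of_pos (hf : f ∈ Set.Icc 0 u) (hyx : 0 < f (y, x)) : Augmentable u f x y :=
  ⟨Function.update f (y, x) 0,
    ⟨le_update_iff.2 ⟨le_rfl, fun a _ => hf.1 a⟩,
      update_le_iff.2 ⟨hyx.le.trans (hf.2 _), fun a _ => hf.2 a⟩⟩,
    f (y, x), hyx, by rw [netOutflow_update]; module⟩

end OrderedRing

/- If `g` sends `ε` from `x` to `y` and `h` sends `η` from `y` to `z`, then in the convex
combination with weights `η / (ε + η)` and `ε / (ε + η)` the contributions at `y` cancel. -/
lemma trans {V 𝕜 : Type*} [Fintype V] [DecidableEq V] [Field 𝕜] [LinearOrder 𝕜]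
    [IsStrictOrderedRing 𝕜] {u f : V × V → 𝕜} {x y z : V}
    (hxy : Augmentable u f x y) (hyz : Augmentable u f y z) : Augmentable u f x z := by
  obtain ⟨g, hg, ε, hε, hgf⟩ := hxy
  obtain ⟨h, hh, η, hη, hhf⟩ := hyz
  have hweights : η / (ε + η) + ε / (ε + η) = 1 := by field_simp; ring
  refine ⟨(η / (ε + η)) • g + (ε / (ε + η)) • h,
    convex_Icc (𝕜 := 𝕜) 0 u hg hh (by positivity) (by positivity) hweights,
    ε * η / (ε + η), by positivity, ?_⟩
  rw [map_add, map_smul, map_smul, hgf, hhf]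
  calc
    _ = (η / (ε + η) + ε / (ε + η)) • netOutflow f +
        (ε * η / (ε + η)) • (Pi.single x 1 - Pi.single z 1) := by module
    _ = _ := by rw [hweights, one_smul]

end Augmentable

lemma not_augmentable_of_isMaxOn {V R : Type*} [Fintype V] [DecidableEq V] [CommRing R]
    [PartialOrder R] [IsOrderedAddMonoid R] {u f : V × V → R} {s t : V} (hst : s ≠ t)
    (hf : f ∈ stFlows u s t) (hmax : IsMaxOn (fun g => netOutflow g s) (stFlows u s t) f) :
    ¬ Augmentable u f s t := by
  rintro ⟨g, hg, ε, hε, hgf⟩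
  have hflow : g ∈ stFlows u s t :=
    ⟨hg, fun v hvs hvt => by simp [hgf, hf.2 v hvs hvt, hvs, hvt]⟩
  have hvalue : netOutflow g s = netOutflow f s + ε := by simp [hgf, hst]
  have hgain : netOutflow f s < netOutflow g s := hvalue ▸ lt_add_of_pos_right _ hε
  exact hgain.not_ge (hmax hflow)

section MaxFlowMinCut

variable {V : Type*} [Fintype V] {u : V × V → ℝ} {s t : V}

lemma exists_isMaxOn_netOutflow_source (hu : 0 ≤ u) (s t : V) :
    ∃ f ∈ stFlows u s t, IsMaxOn (fun g => netOutflow g s) (stFlows u s t) f := by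
  have hcont (v : V) : Continuous fun g : V × V → ℝ => netOutflow g v := by
    simp only [netOutflow_apply]; fun_prop
  have hclosed : IsClosed {f : V × V → ℝ | ∀ v, v ≠ s → v ≠ t → netOutflow f v = 0} := by
    simp only [Set.ofPred_forall]
    exact isClosed_iInter fun v => isClosed_iInter fun _ => isClosed_iInter fun _ =>
      isClosed_eq (hcont v) continuous_const
  have hcompact : IsCompact (stFlows u s t) := isCompact_Icc.inter_right hclosed
  have hzero : (0 : V × V → ℝ) ∈ stFlows u s t := ⟨⟨le_rfl, hu⟩, by simp⟩
  exact hcompact.exists_isMaxOn ⟨0, hzero⟩ (hcont s).continuousOn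

theorem exists_netOutflow_source_eq_sum_cut [DecidableEq V] (hu : 0 ≤ u) (hst : s ≠ t) :
    ∃ f ∈ stFlows u s t, ∃ U : Finset V, s ∈ U ∧ t ∉ U ∧
      netOutflow f s = ∑ a ∈ U ×ˢ Uᶜ, u a := by
  obtain ⟨f, hf, hmax⟩ := exists_isMaxOn_netOutflow_source hu s t
  let U : Finset V := univ.filter fun v => Augmentable u f s v
  have hmem (v : V) : v ∈ U ↔ Augmentable u f s v := by simp [U]
  have hs : s ∈ U := (hmem s).2 (.refl hf.1 s)
  have ht : t ∉ U := fun h => not_augmentable_of_isMaxOn hst hf hmax ((hmem t).1 h)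
  have hleave {v w : V} (hv : v ∈ U) (hw : w ∉ U) : ¬ Augmentable u f v w := fun h =>
    hw ((hmem w).2 (((hmem v).1 hv).trans h))
  have hsaturated : ∀ a ∈ U ×ˢ Uᶜ, f a = u a := fun a ha => by
    rw [mem_product, mem_compl] at ha
    exact (hf.1.2 a).eq_of_not_lt fun h => hleave ha.1 ha.2 (.of_lt_capacity hf.1 h)
  have hempty : ∀ a ∈ Uᶜ ×ˢ U, f a = 0 := fun a ha => by
    rw [mem_product, mem_compl] at ha
    exact ((hf.1.1 a).eq_of_not_lt fun h => hleave ha.2 ha.1 (.of_pos hf.1 h)).symm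
  refine ⟨f, hf, U, hs, ht, ?_⟩
  rw [netOutflow_source_eq_sum_cut hf hs ht, sum_congr rfl hsaturated, sum_eq_zero hempty, sub_zero]

theorem forall_netOutflow_source_le_iff_exists_sum_cut_le [DecidableEq V] (hu : 0 ≤ u)
    (hst : s ≠ t) (φ : ℝ) :
    (∀ f ∈ stFlows u s t, netOutflow f s ≤ φ) ↔
      ∃ U : Finset V, s ∈ U ∧ t ∉ U ∧ ∑ a ∈ U ×ˢ Uᶜ, u a ≤ φ := by
  constructor
  · intro h
    obtain ⟨f, hf, U, hs, ht, heq⟩ := exists_netOutflow_source_eq_sum_cut hu hst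
    exact ⟨U, hs, ht, heq ▸ h f hf⟩
  · rintro ⟨U, hs, ht, hU⟩ f hf
    exact (netOutflow_source_le_sum_cut hf hs ht).trans hU

end MaxFlowMinCut

/-- The real capacities of the arcs in `arcs`, extended by `0` to all vertex pairs. -/
def arcCapacity {V : Type*} (arcs : Finset (V × V)) (c : V × V → ℕ) : V × V → ℝ :=
  Set.indicator arcs fun a => c a

section Arcs

variable {V : Type*}

lemma arcCapacity_nonneg (arcs : Finset (V × V)) (c : V × V → ℕ) : 0 ≤ arcCapacity arcs c :=
  fun a => Set.indicator_nonneg (fun a _ => Nat.cast_nonneg (c a)) a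

lemma mem_Icc_arcCapacity_iff {arcs : Finset (V × V)} {c : V × V → ℕ} {f : V × V → ℝ} :
    f ∈ Set.Icc 0 (arcCapacity arcs c) ↔
      (∀ a ∈ arcs, 0 ≤ f a ∧ f a ≤ c a) ∧ ∀ a ∉ arcs, f a = 0 := by
  have hpointwise (a : V × V) : (0 ≤ f a ∧ f a ≤ arcCapacity arcs c a) ↔
      (a ∈ arcs → 0 ≤ f a ∧ f a ≤ c a) ∧ (a ∉ arcs → f a = 0) := by
    by_cases ha : a ∈ arcs <;> simp [arcCapacity, ha, le_antisymm_iff, and_comm]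
  simp only [Set.mem_Icc, Pi.le_def, Pi.zero_apply, ← forall_and, hpointwise]

lemma outCut_subset (A : Finset (V × V)) (U : Finset V) : outCut A U ⊆ A := filter_subset _ _

lemma outCut_sdiff (A B : Finset (V × V)) (U : Finset V) :
    outCut (A \ B) U = outCut A U \ B := by
  ext a
  simp only [outCut, mem_filter, mem_sdiff]
  tauto

variable [Fintype V]

lemma sum_cut_arcCapacity (arcs : Finset (V × V)) (c : V × V → ℕ) (U : Finset V) :
    ∑ a ∈ U ×ˢ Uᶜ, arcCapacity arcs c a = ∑ a ∈ outCut arcs U, (c a : ℝ) := by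
  have houtCut : outCut arcs U = {a ∈ U ×ˢ Uᶜ | a ∈ arcs} := by
    ext a
    simp only [outCut, mem_filter, mem_product, mem_compl]
    tauto
  simp only [houtCut, sum_filter, arcCapacity, Set.indicator_apply, mem_coe]

lemma flowValue_eq_netOutflow {arcs : Finset (V × V)} {f : V × V → ℝ} (hf : ∀ a ∉ arcs, f a = 0)
    (v : V) : flowValue arcs v f = netOutflow f v := by
  have hsum (p : V × V → Prop) : ∑ a ∈ arcs with p a, f a = ∑ a with p a, f a :=
    sum_subset (filter_subset_filter p (subset_univ arcs)) fun a ha ha' =>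
      hf a fun h => ha' (mem_filter.2 ⟨h, (mem_filter.1 ha).2⟩)
  simp [flowValue, netOutflow_apply, hsum, sum_filter, Fintype.sum_prod_type, sum_comm]

lemma isFlow_iff_mem_stFlows {arcs : Finset (V × V)} {c : V × V → ℕ} {s t : V} {f : V × V → ℝ} :
    IsFlow arcs c s t f ↔ f ∈ stFlows (arcCapacity arcs c) s t := by
  rw [IsFlow, stFlows, Set.mem_ofPred_eq, mem_Icc_arcCapacity_iff, and_assoc]
  refine and_congr_right fun _ => and_congr_right fun hzero =>
    forall_congr' fun v => imp_congr_right fun _ => imp_congr_right fun _ => ?_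
  rw [← flowValue_eq_netOutflow hzero, flowValue, sub_eq_zero, eq_comm]

lemma IsFlow.flowValue_eq {arcs : Finset (V × V)} {c : V × V → ℕ} {s t : V} {f : V × V → ℝ}
    (hf : IsFlow arcs c s t f) : flowValue arcs s f = netOutflow f s :=
  flowValue_eq_netOutflow hf.2.1 s

lemma feasibleBlocker_iff_exists_cut_le {A B : Finset (V × V)} {c : V × V → ℕ} {s t : V} {Φ : ℕ}
    (hst : s ≠ t) : FeasibleBlocker A c s t Φ B ↔
      ∃ U : Finset V, s ∈ U ∧ t ∉ U ∧ ∑ a ∈ outCut A U \ B, c a ≤ Φ :=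
  calc FeasibleBlocker A c s t Φ B
    _ ↔ ∀ f ∈ stFlows (arcCapacity (A \ B) c) s t, netOutflow f s ≤ Φ :=
        forall_congr' fun f => by
          rw [← isFlow_iff_mem_stFlows]
          exact forall_congr' fun hf => by rw [hf.flowValue_eq]
    _ ↔ ∃ U : Finset V, s ∈ U ∧ t ∉ U ∧ ∑ a ∈ U ×ˢ Uᶜ, arcCapacity (A \ B) c a ≤ Φ :=
        forall_netOutflow_source_le_iff_exists_sum_cut_le (arcCapacity_nonneg _ c) hst Φ
    _ ↔ ∃ U : Finset V, s ∈ U ∧ t ∉ U ∧ ∑ a ∈ outCut A U \ B, c a ≤ Φ := by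
        simp only [sum_cut_arcCapacity, outCut_sdiff, ← Nat.cast_sum, Nat.cast_le]

end Arcs

/-- The pair `(U, B)` is admissible for the cut formulation of the blocker problem: `U` separates
`s` from `t`, `B ⊆ δ⁺(U)`, and the arcs of `δ⁺(U) ∖ B` have total capacity at most `Φ`. -/
structure IsCutBlocker {V : Type*} (A : Finset (V × V)) (c : V × V → ℕ) (s t : V) (Φ : ℕ)
    (U : Finset V) (B : Finset (V × V)) : Prop where
  source_mem : s ∈ U
  sink_notMem : t ∉ U
  subset_outCut : B ⊆ outCut A U
  capacity_le : ∑ a ∈ outCut A U \ B, c a ≤ Φ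

section CutBlocker

variable {V : Type*} {A B : Finset (V × V)} {c : V × V → ℕ} {s t : V} {Φ : ℕ} {U : Finset V}

lemma IsCutBlocker.subset (h : IsCutBlocker A c s t Φ U B) : B ⊆ A :=
  h.subset_outCut.trans (outCut_subset A U)

lemma exists_isCutBlocker (A : Finset (V × V)) (c : V × V → ℕ) (Φ : ℕ) (hst : s ≠ t) :
    ∃ U B, IsCutBlocker A c s t Φ U B :=
  ⟨{s}, outCut A {s}, mem_singleton_self s, notMem_singleton.2 hst.symm, subset_rfl, by simp⟩

variable [Fintype V]

lemma IsCutBlocker.feasibleBlocker (h : IsCutBlocker A c s t Φ U B) :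
    FeasibleBlocker A c s t Φ B :=
  (feasibleBlocker_iff_exists_cut_le (ne_of_mem_of_not_mem h.source_mem h.sink_notMem)).2
    ⟨U, h.source_mem, h.sink_notMem, h.capacity_le⟩

lemma FeasibleBlocker.exists_isCutBlocker_subset (hst : s ≠ t) (h : FeasibleBlocker A c s t Φ B) :
    ∃ U, ∃ B' ⊆ B, IsCutBlocker A c s t Φ U B' := by
  obtain ⟨U, hs, ht, hU⟩ := (feasibleBlocker_iff_exists_cut_le hst).1 h
  exact ⟨U, outCut A U ∩ B, inter_subset_right, hs, ht, inter_subset_left,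
    by rwa [sdiff_inter_self_left]⟩

lemma exists_isCutBlocker_forall_sum_le {R : Type*} [AddCommMonoid R] [LinearOrder R]
    [IsOrderedAddMonoid R] (hst : s ≠ t) (c : V × V → ℕ) (Φ : ℕ) {r : V × V → R}
    (hr : ∀ a ∈ A, 0 ≤ r a) :
    ∃ U B, IsCutBlocker A c s t Φ U B ∧
      ∀ B' ⊆ A, FeasibleBlocker A c s t Φ B' → ∑ a ∈ B, r a ≤ ∑ a ∈ B', r a := by
  obtain ⟨U₀, B₀, hB₀⟩ := exists_isCutBlocker A c Φ hst
  obtain ⟨B, ⟨U, hB⟩, hmin⟩ := Set.exists_min_image {B | ∃ U, IsCutBlocker A c s t Φ U B}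
    (fun B => ∑ a ∈ B, r a) (Set.toFinite _) ⟨B₀, U₀, hB₀⟩
  refine ⟨U, B, hB, fun B' hB'A hB' => ?_⟩
  obtain ⟨U'', B'', hsub, hB''⟩ := hB'.exists_isCutBlocker_subset hst
  calc ∑ a ∈ B, r a ≤ ∑ a ∈ B'', r a := hmin B'' ⟨U'', hB''⟩
    _ ≤ ∑ a ∈ B', r a := sum_le_sum_of_subset_of_nonneg hsub fun a ha _ => hr a (hB'A ha)

end CutBlocker

theorem stmt_8_general {V R : Type*} [Fintype V] [AddCommMonoid R]
    [ConditionallyCompleteLinearOrder R] [IsOrderedAddMonoid R] (A : Finset (V × V)) {s t : V}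
    (hst : s ≠ t) (c : V × V → ℕ) (Φ : ℕ) (r : V × V → R) (hr : ∀ a ∈ A, 0 ≤ r a) :
    sInf {w : R | ∃ B ⊆ A, FeasibleBlocker A c s t Φ B ∧ w = ∑ a ∈ B, r a} =
      sInf {w : R | ∃ U : Finset V, ∃ B ⊆ outCut A U, s ∈ U ∧ t ∉ U ∧
        (∑ a ∈ outCut A U \ B, c a) ≤ Φ ∧ w = ∑ a ∈ B, r a} ∧
    ∃ B ⊆ A, FeasibleBlocker A c s t Φ B ∧
      (∑ a ∈ B, r a) =
        sInf {w : R | ∃ B' ⊆ A, FeasibleBlocker A c s t Φ B' ∧ w = ∑ a ∈ B', r a} ∧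
      ∃ U : Finset V, s ∈ U ∧ t ∉ U ∧ B ⊆ outCut A U ∧
        (∑ a ∈ outCut A U \ B, c a) ≤ Φ := by
  obtain ⟨U, B, hB, hmin⟩ := exists_isCutBlocker_forall_sum_le hst c Φ hr
  have hblockers : IsLeast {w : R | ∃ B ⊆ A, FeasibleBlocker A c s t Φ B ∧ w = ∑ a ∈ B, r a}
      (∑ a ∈ B, r a) := by
    refine ⟨⟨B, hB.subset, hB.feasibleBlocker, rfl⟩, ?_⟩
    rintro _ ⟨B', hB'A, hB', rfl⟩
    exact hmin B' hB'A hB'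
  have hcuts : IsLeast {w : R | ∃ U : Finset V, ∃ B ⊆ outCut A U, s ∈ U ∧ t ∉ U ∧
      (∑ a ∈ outCut A U \ B, c a) ≤ Φ ∧ w = ∑ a ∈ B, r a} (∑ a ∈ B, r a) := by
    refine ⟨⟨U, B, hB.subset_outCut, hB.source_mem, hB.sink_notMem, hB.capacity_le, rfl⟩, ?_⟩
    rintro _ ⟨U', B', hsub, hs, ht, hcap, rfl⟩
    have hB' : IsCutBlocker A c s t Φ U' B' := ⟨hs, ht, hsub, hcap⟩
    exact hmin B' hB'.subset hB'.feasibleBlocker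
  exact ⟨hblockers.csInf_eq.trans hcuts.csInf_eq.symm, B, hB.subset, hB.feasibleBlocker,
    hblockers.csInf_eq.symm, U, hB.source_mem, hB.sink_notMem, hB.subset_outCut, hB.capacity_le⟩

/-- **Theorem 3.2.1** (structure of maximum flow blockers): the optimal value of the
maximum flow blocker problem equals the minimum of `Σ_{a∈B} r(a)` over all pairs
`(U, B)` with `s ∈ U`, `t ∉ U`, `B ⊆ δ⁺(U)` and `Σ_{a ∈ δ⁺(U)∖B} c(a) ≤ Φ`; in
particular, some optimal blocker is contained in `δ⁺(U)` for such a vertex set `U`. -/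
theorem stmt_8 {V : Type*} [Fintype V] (A : Finset (V × V)) (s t : V) (hst : s ≠ t)
    (c r : V × V → ℕ) (Φ : ℕ) :
    sInf {w : ℕ | ∃ B ⊆ A, FeasibleBlocker A c s t Φ B ∧ w = ∑ a ∈ B, r a} =
      sInf {w : ℕ | ∃ U : Finset V, ∃ B ⊆ outCut A U, s ∈ U ∧ t ∉ U ∧
        (∑ a ∈ outCut A U \ B, c a) ≤ Φ ∧ w = ∑ a ∈ B, r a} ∧
    ∃ B ⊆ A, FeasibleBlocker A c s t Φ B ∧
      (∑ a ∈ B, r a) =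
        sInf {w : ℕ | ∃ B' ⊆ A, FeasibleBlocker A c s t Φ B' ∧ w = ∑ a ∈ B', r a} ∧
      ∃ U : Finset V, s ∈ U ∧ t ∉ U ∧ B ⊆ outCut A U ∧
        (∑ a ∈ outCut A U \ B, c a) ≤ Φ :=
  stmt_8_general A hst c Φ r fun a _ => Nat.zero_le (r a)

end
end

section
/- Let n ≥ 1 and m ≥ 1 be integers, and set α = ⌈n/m⌉, n_{α−1} = mα − n, and n_α = n − m(α−1). The minimum number of edges that must be deleted from the complete graph on n vertices so that the resulting graph contains no clique of size m+1 equals n_{α−1}·(α−1)(α−2)/2 + n_α·α(α−1)/2. -/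
open Finset

/-! The edges deleted from a complete graph are those of the complement of what remains, so by
Turán's theorem the minimum is the number of edges of the complement of the Turán graph. That
complement is a disjoint union of cliques, one for each residue class modulo `m`, and the `n`
vertices are spread over the `m` classes as evenly as possible. -/

section

variable {V : Type*} [Fintype V] {G : SimpleGraph V} [DecidableRel G.Adj]

theorem card_edgeFinset_eq_sum_choose_two_card_fiber {ι : Type*} [DecidableEq ι] {f : V → ι}
    {t : Finset ι} (hf : ∀ v, f v ∈ t) (hG : ∀ v w, G.Adj v w ↔ v ≠ w ∧ f v = f w) :
    #G.edgeFinset = ∑ i ∈ t, (#{v | f v = i}).choose 2 := by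
  classical
  have degree_eq (v : V) : G.degree v = #{w | f w = f v} - 1 := by
    have neighborFinset_eq : G.neighborFinset v = ({w | f w = f v} : Finset V).erase v := by
      ext w
      simp only [SimpleGraph.mem_neighborFinset, hG, mem_erase, mem_filter_univ, ne_comm, eq_comm]
    rw [← SimpleGraph.card_neighborFinset_eq_degree, neighborFinset_eq,
      card_erase_of_mem (by simp)]
  refine Nat.eq_of_mul_eq_mul_left two_pos ?_
  calc 2 * #G.edgeFinset = ∑ v, (#{w | f w = f v} - 1) := by
        simp only [← SimpleGraph.sum_degrees_eq_twice_card_edges, degree_eq]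
    _ = ∑ i ∈ t, ∑ v with f v = i, (#{w | f w = i} - 1) :=
        (sum_fiberwise_of_maps_to' (fun v _ ↦ hf v) fun i ↦ #{w | f w = i} - 1).symm
    _ = ∑ i ∈ t, 2 * (#{v | f v = i}).choose 2 := by
        simp only [sum_const, smul_eq_mul, Nat.choose_two_right,
          Nat.two_mul_div_two_of_even (Nat.even_mul_pred_self _)]
    _ = 2 * ∑ i ∈ t, (#{v | f v = i}).choose 2 := (mul_sum ..).symm

variable [DecidableEq V]

theorem card_edgeFinset_add_card_edgeFinset_compl :
    #G.edgeFinset + #Gᶜ.edgeFinset = (Fintype.card V).choose 2 := by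
  rw [← card_union_of_disjoint (SimpleGraph.disjoint_edgeFinset.mpr disjoint_compl_right),
    ← SimpleGraph.edgeFinset_sup, ← SimpleGraph.card_edgeFinset_top_eq_card_choose_two]
  congr! 2
  exact sup_compl_eq_top

theorem isLeast_choose_two_sub_card_edgeSet_of_isExtremal {p : SimpleGraph V → Prop}
    (hG : G.IsExtremal p) :
    IsLeast {d | ∃ H, p H ∧ d = (Fintype.card V).choose 2 - Nat.card H.edgeSet}
      #Gᶜ.edgeFinset := by
  have card_compl : #Gᶜ.edgeFinset = (Fintype.card V).choose 2 - #G.edgeFinset :=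
    Nat.eq_sub_of_add_eq' card_edgeFinset_add_card_edgeFinset_compl
  rw [card_compl]
  constructor
  · exact ⟨G, hG.prop, by rw [Nat.card_eq_fintype_card, SimpleGraph.edgeFinset_card]⟩
  · classical
    rintro _ ⟨H, hH, rfl⟩
    rw [Nat.card_eq_fintype_card, ← SimpleGraph.edgeFinset_card]
    exact Nat.sub_le_sub_left (hG.2 hH) _

end

theorem card_fin_filter_mod_eq {m c : ℕ} (n : ℕ) (hc : c < m) :
    #{v : Fin n | (v : ℕ) % m = c} = n / m + if c < n % m then 1 else 0 := by
  have count_eq := Nat.count_modEq_card n (Nat.zero_lt_of_lt hc) c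
  simp only [Nat.count_eq_card_filter_range, Nat.ModEq, Nat.mod_eq_of_lt hc] at count_eq
  rw [← count_eq, card_filter, card_filter]
  exact Fin.sum_univ_eq_sum_range (fun v ↦ if v % m = c then 1 else 0) n

theorem card_edgeFinset_compl_turanGraph (n : ℕ) {m : ℕ} (hm : 0 < m) :
    #(SimpleGraph.turanGraph n m)ᶜ.edgeFinset =
      (m - n % m) * (n / m).choose 2 + n % m * (n / m + 1).choose 2 := by
  have card_large : #{c ∈ range m | c < n % m} = n % m := by
    rw [range_eq_Ico, Ico_filter_lt, min_eq_right (Nat.mod_lt n hm).le, Nat.card_Ico,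
      Nat.sub_zero]
  have card_small : #{c ∈ range m | ¬c < n % m} = m - n % m := by
    rw [filter_not, card_sdiff_of_subset (filter_subset ..), card_range, card_large]
  calc #(SimpleGraph.turanGraph n m)ᶜ.edgeFinset
      = ∑ c ∈ range m, (#{v : Fin n | (v : ℕ) % m = c}).choose 2 :=
        card_edgeFinset_eq_sum_choose_two_card_fiber
          (fun v ↦ mem_range.mpr (Nat.mod_lt v hm))
          (by simp [SimpleGraph.turanGraph_adj])
    _ = ∑ c ∈ range m, if c < n % m then (n / m + 1).choose 2 else (n / m).choose 2 := by
        refine sum_congr rfl fun c hc ↦ ?_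
        rw [card_fin_filter_mod_eq n (mem_range.mp hc)]
        split_ifs <;> rfl
    _ = (m - n % m) * (n / m).choose 2 + n % m * (n / m + 1).choose 2 := by
        rw [sum_ite, sum_const, sum_const, card_large, card_small, smul_eq_mul, smul_eq_mul,
          add_comm]

theorem sub_mod_mul_add_mod_mul_eq_ceilDiv {n m : ℕ} (hn : 0 < n) (hm : 0 < m) (f : ℕ → ℕ) :
    (m - n % m) * f (n / m) + n % m * f (n / m + 1) =
      (m * (n ⌈/⌉ m) - n) * f (n ⌈/⌉ m - 1) + (n - m * (n ⌈/⌉ m - 1)) * f (n ⌈/⌉ m) := by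
  have div_add_mod : m * (n / m) + n % m = n := Nat.div_add_mod n m
  have mod_lt : n % m < m := Nat.mod_lt n hm
  rcases Nat.eq_zero_or_pos (n % m) with mod_eq_zero | mod_pos
  · have ceil_eq : n ⌈/⌉ m = n / m := by
      rw [Nat.ceilDiv_eq_add_pred_div, Nat.div_eq_iff hm]
      lia
    obtain ⟨q, div_eq⟩ := Nat.exists_eq_add_one.mpr
      (Nat.div_pos (Nat.le_of_mod_lt (by lia : n % m < n)) hm)
    have n_eq : n = m * (q + 1) := by
      rw [← div_eq, Nat.mul_div_cancel' (Nat.dvd_of_mod_eq_zero mod_eq_zero)]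
    have small : m * (q + 1) - n = 0 := by rw [n_eq, Nat.sub_self]
    have large : n - m * q = m := by rw [n_eq, mul_add_one, Nat.add_sub_cancel_left]
    rw [ceil_eq, div_eq, mod_eq_zero, Nat.add_sub_cancel, small, large, Nat.sub_zero]
    ring
  · have ceil_eq : n ⌈/⌉ m = n / m + 1 := by
      rw [Nat.ceilDiv_eq_add_pred_div, Nat.div_eq_iff hm]
      lia
    have small : m * (n / m + 1) - n = m - n % m := by lia
    have large : n - m * (n / m) = n % m := by lia
    rw [ceil_eq, Nat.add_sub_cancel, small, large]

/-- **Proposition 4.2.3** (`f(K,m)`): with `α = ⌈n/m⌉`, `n_{α-1} = mα - n` and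
`n_α = n - m(α-1)`, the minimum number of edges whose deletion from the complete graph
`K_n` leaves a graph with no clique of size `m+1` equals
`n_{α-1}·(α-1)(α-2)/2 + n_α·α(α-1)/2`. -/
theorem stmt_9 (n m : ℕ) (hn : 1 ≤ n) (hm : 1 ≤ m) :
    sInf {d : ℕ | ∃ H : SimpleGraph (Fin n), H.CliqueFree (m + 1) ∧
        d = n.choose 2 - Nat.card H.edgeSet} =
      (m * ((n + m - 1) / m) - n) *
          ((((n + m - 1) / m) - 1) * (((n + m - 1) / m) - 2) / 2) +
        (n - m * (((n + m - 1) / m) - 1)) *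
          ((((n + m - 1) / m)) * (((n + m - 1) / m) - 1) / 2) := by
  have turan_isLeast := isLeast_choose_two_sub_card_edgeSet_of_isExtremal
    (SimpleGraph.isTuranMaximal_turanGraph (n := n) hm)
  rw [Fintype.card_fin] at turan_isLeast
  rw [turan_isLeast.csInf_eq, card_edgeFinset_compl_turanGraph n hm,
    sub_mod_mul_add_mod_mul_eq_ceilDiv hn hm (Nat.choose · 2), Nat.ceilDiv_eq_add_pred_div,
    Nat.choose_two_right, Nat.choose_two_right, Nat.sub_sub]
end

section
/- For every integer n ≥ 4, the minimum number of chords (edges joining two non-consecutive vertices of the cycle) that must be added to the cycle C_n so that the resulting graph is an interval graph equals n − 3. -/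
open Finset

/-- `H` is an interval graph: each vertex can be assigned a nonempty closed real
interval such that two distinct vertices are adjacent iff their intervals intersect. -/
def IsIntervalGraph {W : Type*} (H : SimpleGraph W) : Prop :=
  ∃ a b : W → ℝ, (∀ v, a v ≤ b v) ∧
    ∀ u v : W, u ≠ v →
      (H.Adj u v ↔ (Set.Icc (a u) (b u) ∩ Set.Icc (a v) (b v)).Nonempty)

/-!
Order the vertices of an interval graph by left endpoint. An edge from an earlier vertex `u` to a
vertex that is not earlier than `v` then forces `u` and `v` to be adjacent, so the earlier
neighbours of `v` separate `v` from the remaining earlier vertices. If fewer than `k` deletions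
never disconnect the graph, the `j`-th vertex (counted from `0`) thus has at least `min j k` earlier
neighbours. A supergraph of a cycle qualifies for `k = 2`, so it has at least
`0 + 1 + 2 + ⋯ + 2 = 2n - 3` edges. The fan, in which the `j`-th vertex has exactly the earlier
neighbours `0` and `j - 1`, attains this bound.
-/

theorem Icc_inter_Icc_nonempty_iff {α : Type*} [Lattice α] {a b c d : α} (hab : a ≤ b)
    (hcd : c ≤ d) : (Set.Icc a b ∩ Set.Icc c d).Nonempty ↔ a ≤ d ∧ c ≤ b := by
  rw [Set.Icc_inter_Icc, Set.nonempty_Icc, sup_le_iff, le_inf_iff, le_inf_iff]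
  tauto

theorem sum_range_min_two {n : ℕ} (hn : 2 ≤ n) : ∑ j ∈ range n, min j 2 = 2 * n - 3 := by
  induction n, hn using Nat.le_induction with
  | base => rfl
  | succ n hn ih => rw [sum_range_succ, ih]; omega

theorem exists_linearOrder_monotone {α β : Type*} [LinearOrder β] (f : α → β) :
    ∃ _ : LinearOrder α, Monotone f := by
  obtain ⟨_, -⟩ := exists_wellFoundedLT α
  let key (x : α) : β ×ₗ α := toLex (f x, x)
  have key_injective : key.Injective := fun x y h ↦ congrArg (fun p ↦ (ofLex p).2) h
  exact ⟨LinearOrder.lift' key key_injective, fun _ _ h ↦ Prod.Lex.monotone_fst _ _ h⟩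

section LinearOrder

variable {V : Type*} [Fintype V] [LinearOrder V]

theorem sum_card_filter_lt {M : Type*} [AddCommMonoid M] (f : ℕ → M) :
    ∑ v : V, f #{u | u < v} = ∑ j ∈ range (Fintype.card V), f j := by
  let e : Fin (Fintype.card V) ≃o V := Fintype.orderIsoFinOfCardEq V rfl
  have card_lt (i : Fin (Fintype.card V)) : #{u | u < e i} = i := by
    rw [← Fin.card_Iio i]
    exact (card_bij (fun j _ ↦ e j) (by simp) (by simp)
      fun u hu ↦ ⟨e.symm u, by simpa [e.symm_apply_lt] using hu, by simp⟩).symm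
  rw [← e.toEquiv.sum_comp, ← Fin.sum_univ_eq_sum_range]
  exact sum_congr rfl fun i _ ↦ congrArg f (card_lt i)

theorem card_edgeSet_eq_sum_card_lt_adj (G : SimpleGraph V) [DecidableRel G.Adj] :
    Nat.card G.edgeSet = ∑ v, #{u | u < v ∧ G.Adj u v} := by
  rw [Nat.card_eq_fintype_card, ← SimpleGraph.edgeFinset_card, ← card_sigma]
  symm
  apply card_bij fun x _ ↦ s(x.2, x.1)
  · simp
  · rintro ⟨v, u⟩ huv ⟨v', u'⟩ huv' heq
    simp only [mem_sigma, mem_filter, mem_univ, true_and] at huv huv'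
    rcases Sym2.eq_iff.mp heq with ⟨rfl, rfl⟩ | ⟨rfl, rfl⟩
    · rfl
    · exact absurd huv.1 huv'.1.asymm
  · intro e
    induction e with | _ u v
    intro huv
    rw [SimpleGraph.mem_edgeFinset, SimpleGraph.mem_edgeSet] at huv
    rcases huv.ne.lt_or_gt with hlt | hlt
    · exact ⟨⟨v, u⟩, by simp [hlt, huv], rfl⟩
    · exact ⟨⟨u, v⟩, by simp [hlt, huv.symm], Sym2.eq_swap⟩

end LinearOrder

/-- Weak `k`-connectedness: `G` cannot be disconnected by deleting fewer than `k` vertices. Unlike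
for `k`-connectedness, `G` need not have more than `k` vertices. -/
def IsVertexPreconnected {V : Type*} (G : SimpleGraph V) (k : ℕ) : Prop :=
  ∀ S : Finset V, #S < k → (G.induce (S : Set V)ᶜ).Preconnected

theorem IsVertexPreconnected.mono {V : Type*} {G H : SimpleGraph V} {k : ℕ} (hGH : G ≤ H)
    (hG : IsVertexPreconnected G k) : IsVertexPreconnected H k :=
  fun S hS ↦ (hG S hS).mono (SimpleGraph.comap_monotone _ hGH)

theorem cycleGraph_induce_compl_singleton_preconnected {n : ℕ} (p : Fin n) :
    ((SimpleGraph.cycleGraph n).induce {p}ᶜ).Preconnected := by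
  obtain _ | n := n
  · exact p.elim0
  let f : SimpleGraph.pathGraph n →g (SimpleGraph.cycleGraph (n + 1)).induce {p}ᶜ :=
    { toFun i := ⟨p + i.succ, by simp⟩
      map_rel' {i j} hij := by
        simp only [SimpleGraph.comap_adj, Function.Embedding.subtype_apply,
          SimpleGraph.cycleGraph_adj', add_sub_add_left_eq_sub]
        rw [SimpleGraph.pathGraph_adj] at hij
        grind [Fin.sub_val_of_le, Fin.le_def] }
  refine (SimpleGraph.pathGraph_preconnected n).map f fun ⟨q, hq⟩ ↦ ?_
  obtain ⟨i, hi⟩ := Fin.exists_succ_eq.mpr (sub_ne_zero.mpr hq)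
  exact ⟨i, Subtype.ext (by simp [f, hi])⟩

theorem isVertexPreconnected_cycleGraph (n : ℕ) :
    IsVertexPreconnected (SimpleGraph.cycleGraph n) 2 := by
  intro S hS
  obtain rfl | ⟨p, rfl⟩ : S = ∅ ∨ ∃ p, S = {p} := by
    rw [← card_eq_zero, ← card_eq_one]
    omega
  · rw [coe_empty, Set.compl_empty]
    exact (SimpleGraph.induceUnivIso _).preconnected_iff.mpr SimpleGraph.cycleGraph_preconnected
  · rw [coe_singleton]
    exact cycleGraph_induce_compl_singleton_preconnected p

/-- Interval orderings of a graph: an edge joins its first vertex to everything in between. They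
abstract the order of the left endpoints in an interval representation. -/
def IsIntervalOrdering {V : Type*} [LinearOrder V] (G : SimpleGraph V) : Prop :=
  ∀ ⦃u v w : V⦄, u < v → v ≤ w → G.Adj u w → G.Adj u v

theorem IsIntervalGraph.exists_isIntervalOrdering {V : Type*} {G : SimpleGraph V}
    (hG : IsIntervalGraph G) : ∃ _ : LinearOrder V, IsIntervalOrdering G := by
  obtain ⟨a, b, hab, hadj⟩ := hG
  obtain ⟨order, left_mono⟩ := exists_linearOrder_monotone a
  refine ⟨order, fun u v w huv hvw huw ↦ ?_⟩
  rw [hadj u w huw.ne, Icc_inter_Icc_nonempty_iff (hab u) (hab w)] at huw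
  rw [hadj u v huv.ne, Icc_inter_Icc_nonempty_iff (hab u) (hab v)]
  exact ⟨(left_mono huv.le).trans (hab v), (left_mono hvw).trans huw.2⟩

theorem IsIntervalOrdering.adj_of_lt_of_preconnected {V : Type*} [LinearOrder V]
    {G : SimpleGraph V} (hG : IsIntervalOrdering G) {u v : V}
    (hconn : (G.induce {x | x < v ∧ G.Adj x v}ᶜ).Preconnected) (huv : u < v) :
    G.Adj u v := by
  by_contra hadj
  obtain ⟨walk⟩ := hconn ⟨u, by simp [hadj]⟩ ⟨v, by simp⟩
  obtain ⟨⟨⟨x, y⟩, hxy⟩, -, hx, hy⟩ :=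
    walk.exists_boundary_dart {x | (x : V) < v} huv (lt_irrefl v)
  exact x.2 ⟨hx, hG hx (not_lt.mp hy) hxy⟩

theorem IsIntervalOrdering.min_le_card_lt_adj {V : Type*} [Fintype V] [LinearOrder V]
    {G : SimpleGraph V} [DecidableRel G.Adj] (hG : IsIntervalOrdering G) {k : ℕ}
    (hconn : IsVertexPreconnected G k) (v : V) :
    min #{u | u < v} k ≤ #{u | u < v ∧ G.Adj u v} := by
  obtain hlt | hle := lt_or_ge #{u | u < v ∧ G.Adj u v} k
  · have hpre := hconn _ hlt
    rw [coe_filter_univ] at hpre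
    exact min_le_of_left_le <| card_le_card fun u hu ↦ by
      simpa using ⟨(mem_filter.mp hu).2, hG.adj_of_lt_of_preconnected hpre (mem_filter.mp hu).2⟩
  · exact min_le_of_right_le hle

theorem IsIntervalGraph.sum_min_le_card_edgeSet {V : Type*} [Fintype V] {G : SimpleGraph V}
    (hG : IsIntervalGraph G) {k : ℕ} (hconn : IsVertexPreconnected G k) :
    ∑ j ∈ range (Fintype.card V), min j k ≤ Nat.card G.edgeSet := by
  classical
  obtain ⟨_, hord⟩ := hG.exists_isIntervalOrdering
  rw [card_edgeSet_eq_sum_card_lt_adj, ← sum_card_filter_lt (V := V) (min · k)]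
  exact sum_le_sum fun v _ ↦ hord.min_le_card_lt_adj hconn v

/-- The fan on `n` vertices: vertex `0` joined to every vertex of the path `1, …, n - 1`. -/
def fan (n : ℕ) : SimpleGraph (Fin n) :=
  .fromRel fun u v ↦ u.val = 0 ∨ u.val + 1 = v.val

theorem cycleGraph_le_fan (n : ℕ) : SimpleGraph.cycleGraph n ≤ fan n := by
  intro u v huv
  have val_eq {x y : Fin n} (h : (x - y).val = 1) : x.val = 0 ∨ y.val + 1 = x.val := by
    obtain hle | hlt := le_or_gt y x
    · rw [Fin.sub_val_of_le hle] at h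
      omega
    · rw [Fin.coe_sub_iff_lt.mpr hlt] at h
      omega
  rw [fan, SimpleGraph.fromRel_adj]
  refine ⟨huv.ne, ?_⟩
  have := (SimpleGraph.cycleGraph_adj'.mp huv).imp val_eq val_eq
  tauto

theorem isIntervalGraph_fan (n : ℕ) : IsIntervalGraph (fan n) := by
  let right (v : Fin n) : ℕ := if v.val = 0 then n else v + 1
  have le_right (v : Fin n) : (v : ℝ) ≤ right v := Nat.cast_le.mpr (by grind)
  refine ⟨fun v ↦ v, fun v ↦ right v, le_right, fun u v huv ↦ ?_⟩
  rw [Icc_inter_Icc_nonempty_iff (le_right u) (le_right v), Nat.cast_le, Nat.cast_le]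
  simp only [fan, SimpleGraph.fromRel_adj, right]
  grind

theorem card_edgeSet_fan_le (n : ℕ) : Nat.card (fan n).edgeSet ≤ ∑ j ∈ range n, min j 2 := by
  classical
  rw [card_edgeSet_eq_sum_card_lt_adj, ← Fin.sum_univ_eq_sum_range (min · 2)]
  refine sum_le_sum fun v _ ↦ le_min ?_ ?_
  · calc #{u | u < v ∧ (fan n).Adj u v} ≤ #(Iio v) := card_le_card fun u hu ↦ by simp_all
      _ = v := Fin.card_Iio v
  · have earlier_neighbors : ({u | u < v ∧ (fan n).Adj u v} : Finset (Fin n)).image Fin.val ⊆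
        {0, v.val - 1} := by
      intro j
      simp only [mem_image, mem_filter, fan, SimpleGraph.fromRel_adj]
      grind
    rw [← card_image_of_injective _ Fin.val_injective]
    exact (card_le_card earlier_neighbors).trans card_le_two

/-- **Proposition 4.1.6**: for `n ≥ 4`, the minimum number of chords that must be added
to the cycle `C_n` so that the resulting graph is an interval graph equals `n - 3`.
(A supergraph `H ⊇ C_n` on the same vertices has exactly `|E(H)| - n` added chords.) -/
theorem stmt_10 (n : ℕ) (hn : 4 ≤ n) :
    sInf {d : ℕ | ∃ H : SimpleGraph (Fin n), SimpleGraph.cycleGraph n ≤ H ∧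
        IsIntervalGraph H ∧ d = Nat.card H.edgeSet - n} = n - 3 := by
  have sum_eq : ∑ j ∈ range n, min j 2 = 2 * n - 3 := sum_range_min_two (by omega)
  have card_ge {H : SimpleGraph (Fin n)} (hle : SimpleGraph.cycleGraph n ≤ H)
      (hH : IsIntervalGraph H) : 2 * n - 3 ≤ Nat.card H.edgeSet := by
    simpa only [Fintype.card_fin, sum_eq] using
      hH.sum_min_le_card_edgeSet ((isVertexPreconnected_cycleGraph n).mono hle)
  have card_fan : Nat.card (fan n).edgeSet = 2 * n - 3 :=
    le_antisymm (sum_eq ▸ card_edgeSet_fan_le n)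
      (card_ge (cycleGraph_le_fan n) (isIntervalGraph_fan n))
  refine IsLeast.csInf_eq ⟨⟨fan n, cycleGraph_le_fan n, isIntervalGraph_fan n, by omega⟩, ?_⟩
  rintro _ ⟨H, hle, hH, rfl⟩
  have := card_ge hle hH
  omega
end

section
/- Let K be a clique of G with n = |V(K)|, and set α = ⌈n/m⌉, n_{α−1} = mα − n, n_α = n − m(α−1), and f(K, m) = n_{α−1}·(α−1)(α−2)/2 + n_α·α(α−1)/2. Then the inequality Σ_{e∈E(K)} z_e ≤ |E(K)| − f(K, m) is valid for P_I(G, m), i.e., every feasible edge set I satisfies |I ∩ E(K)| ≤ |E(K)| − f(K, m). -/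
open Finset
open scoped Classical

noncomputable section

/-- An edge set of `G` (given as a subgraph `H ≤ G`) is feasible if `(V, I)` is an
interval graph which is `m`-clique free (contains no clique of size `m+1`). -/
def FeasibleEdges {V : Type*} (G H : SimpleGraph V) (m : ℕ) : Prop :=
  H ≤ G ∧ IsIntervalGraph H ∧ H.CliqueFree (m + 1)

/-- The `m`-clique free interval subgraph polytope `P_I(G,m) ⊆ ℝ^E`: the convex hull of
the incidence vectors of feasible edge sets. -/
def PI {V : Type*} [Fintype V] (G : SimpleGraph V) (m : ℕ) : Set (G.edgeSet → ℝ) :=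
  convexHull ℝ
    {z | ∃ H : SimpleGraph V, FeasibleEdges G H m ∧
      ∀ e : G.edgeSet, z e = if (e : Sym2 V) ∈ H.edgeSet then 1 else 0}

/-- `E(K)`: the edges of `G` with both endpoints in `K`. -/
def cliqueEdges {V : Type*} [Fintype V] (G : SimpleGraph V) (K : Finset V) :
    Finset G.edgeSet :=
  Finset.filter (fun e : G.edgeSet => ∀ v ∈ (e : Sym2 V), v ∈ K) Finset.univ

/-!
Only the absence of large cliques inside `K` matters. By Turán's theorem a graph on `n` vertices
without a clique of size `m + 1` has at most as many edges as the Turán graph, whose complement is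
a disjoint union of `m` cliques of sizes `⌈n/m⌉ - 1` and `⌈n/m⌉`. These have `f(K, m)` edges in
total, as one sees by adding a vertex to each of the `m` parts at once, and at least that many
edges of `K` are therefore missing.
-/

open SimpleGraph

section TuranGraph

/-- The number `f(K, m)` for a clique `K` on `n` vertices: the number of edges of a disjoint union
of `m` cliques of sizes `⌈n/m⌉ - 1` and `⌈n/m⌉` on `n` vertices in total. For `0 < n` and `0 < m`
the only subtraction that can truncate is `α - 2` at `α = 1`, where its cofactor vanishes. -/
def balancedCliqueEdges (n m : ℕ) : ℕ :=
  let α := (n + m - 1) / m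
  (m * α - n) * ((α - 1) * (α - 2) / 2) + (n - m * (α - 1)) * (α * (α - 1) / 2)

theorem balancedCliqueEdges_zero_left (m : ℕ) : balancedCliqueEdges 0 m = 0 := by
  have ceil_zero : (0 + m - 1) / m = 0 := by rw [Nat.div_eq_zero_iff]; omega
  simp only [balancedCliqueEdges, ceil_zero, Nat.zero_sub, mul_zero, Nat.zero_div, add_zero]

theorem balancedCliqueEdges_eq_choose_two {a b k : ℕ} (hb : 0 < b) :
    balancedCliqueEdges (a * k + b * (k + 1)) (a + b) =
      a * k.choose 2 + b * (k + 1).choose 2 := by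
  have ceil_eq : (a * k + b * (k + 1) + (a + b) - 1) / (a + b) = k + 1 := by
    refine Nat.div_eq_of_lt_le ?_ ?_ <;> grind
  have card_small : (a + b) * (k + 1) - (a * k + b * (k + 1)) = a :=
    Nat.sub_eq_of_eq_add (by ring)
  have card_large : a * k + b * (k + 1) - (a + b) * k = b := Nat.sub_eq_of_eq_add (by ring)
  simp only [balancedCliqueEdges, ceil_eq, card_small, card_large, Nat.choose_two_right,
    Nat.add_sub_cancel, Nat.add_sub_add_right k 1 1]

theorem exists_balanced_partition {n m : ℕ} (hn : 0 < n) (hm : 0 < m) :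
    ∃ a b k, 0 < b ∧ a + b = m ∧ a * k + b * (k + 1) = n := by
  obtain ⟨a, ha⟩ := Nat.exists_eq_add_of_lt (Nat.mod_lt (n - 1) hm)
  refine ⟨a, (n - 1) % m + 1, (n - 1) / m, Nat.succ_pos _, by omega, ?_⟩
  calc a * ((n - 1) / m) + ((n - 1) % m + 1) * ((n - 1) / m + 1)
    _ = ((n - 1) % m + a + 1) * ((n - 1) / m) + (n - 1) % m + 1 := by ring
    _ = m * ((n - 1) / m) + (n - 1) % m + 1 := by rw [← ha]
    _ = n := by rw [Nat.div_add_mod, Nat.sub_add_cancel hn]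

theorem add_choose_two (n r : ℕ) :
    (n + r).choose 2 = n.choose 2 + n * r + r.choose 2 := by
  induction r with
  | zero => simp
  | succ r ih =>
    rw [← add_assoc, Nat.choose_succ_succ', Nat.choose_succ_succ' r, ih, Nat.choose_one_right,
      Nat.choose_one_right]
    ring

theorem card_edgeFinset_of_eq_top {W : Type*} [Fintype W] {H : SimpleGraph W}
    [Fintype H.edgeSet] (h : H = ⊤) : #H.edgeFinset = (Fintype.card W).choose 2 := by
  subst h
  convert card_edgeFinset_top_eq_card_choose_two (V := W)

theorem card_edgeFinset_turanGraph_of_le {n r : ℕ} (h : n ≤ r) :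
    #(turanGraph n r).edgeFinset = n.choose 2 := by
  rw [card_edgeFinset_of_eq_top (turanGraph_eq_top.mpr (.inr h)), Fintype.card_fin]

theorem card_edgeFinset_turanGraph_add_choose_two (a b k : ℕ) :
    #(turanGraph (a * k + b * (k + 1)) (a + b)).edgeFinset +
        (a * k.choose 2 + b * (k + 1).choose 2) = (a * k + b * (k + 1)).choose 2 := by
  induction k with
  | zero =>
    rw [mul_zero, zero_add, zero_add, mul_one, card_edgeFinset_turanGraph_of_le (b.le_add_left a)]
    simp
  | succ k ih =>
    have enlarge_parts : a * (k + 1) + b * (k + 1 + 1) = a * k + b * (k + 1) + (a + b) := by ring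
    have choose_succ : ∀ j : ℕ, (j + 1).choose 2 = j + j.choose 2 := fun j => by
      rw [Nat.choose_succ_succ', Nat.choose_one_right]
    have mul_card_parts : (a * k + b * (k + 1)) * (a + b) =
        (a * k + b * (k + 1)) * (a + b - 1) + (a * k + b * (k + 1)) := by
      obtain h | h := (a + b).eq_zero_or_pos
      · obtain ⟨rfl, rfl⟩ := Nat.add_eq_zero_iff.mp h
        simp
      · rw [← Nat.mul_succ, Nat.succ_eq_add_one, Nat.sub_add_cancel h]
    rw [enlarge_parts, card_edgeFinset_turanGraph_add, add_choose_two _ (a + b), mul_card_parts,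
      ← ih, choose_succ (k + 1), choose_succ k]
    ring

theorem card_edgeFinset_turanGraph_add_balancedCliqueEdges (n : ℕ) {m : ℕ} (hm : 0 < m) :
    #(turanGraph n m).edgeFinset + balancedCliqueEdges n m = n.choose 2 := by
  obtain rfl | hn := n.eq_zero_or_pos
  · rw [balancedCliqueEdges_zero_left, card_edgeFinset_turanGraph_of_le m.zero_le, add_zero]
  · obtain ⟨a, b, k, hb, rfl, rfl⟩ := exists_balanced_partition hn hm
    rw [balancedCliqueEdges_eq_choose_two hb, card_edgeFinset_turanGraph_add_choose_two]

theorem card_edgeFinset_add_balancedCliqueEdges_le {W : Type*} [Fintype W] {H : SimpleGraph W}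
    [DecidableRel H.Adj] {m : ℕ} (hm : 0 < m) (hH : H.CliqueFree (m + 1)) :
    #H.edgeFinset + balancedCliqueEdges (Fintype.card W) m ≤ (Fintype.card W).choose 2 := by
  have turan : #H.edgeFinset ≤ #(turanGraph (Fintype.card W) m).edgeFinset :=
    hH.card_edgeFinset_le.trans_eq card_edgeFinset_turanGraph.symm
  grw [turan, card_edgeFinset_turanGraph_add_balancedCliqueEdges _ hm]

end TuranGraph

section CliqueEdges

variable {V : Type*} [Fintype V]

theorem image_val_cliqueEdges (G : SimpleGraph V) (K : Finset V) :
    (cliqueEdges G K).image Subtype.val = {e ∈ G.edgeFinset | e.toFinset ⊆ K} := by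
  ext e
  simp [cliqueEdges, subset_iff, and_comm]

theorem card_cliqueEdges {G : SimpleGraph V} {K : Finset V} (hK : G.IsClique ↑K) :
    #(cliqueEdges G K) = (#K).choose 2 := by
  rw [← card_image_of_injective _ Subtype.val_injective, image_val_cliqueEdges,
    card_filter_edgeFinset_toFinset_subset, card_edgeFinset_of_eq_top (induce_eq_top.mpr hK)]
  simp

-- The membership test forces `e : Sym2 V`, so the filtered set is the image of `cliqueEdges G K`
-- in `Sym2 V`, elaborated as a monadic lift.
theorem card_filter_cliqueEdges (G H : SimpleGraph V) (K : Finset V) :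
    #((cliqueEdges G K).filter (fun e => (e : Sym2 V) ∈ H.edgeSet)) =
      #((G ⊓ H).induce (K : Set V)).edgeFinset := by
  rw [← card_filter_edgeFinset_toFinset_subset]
  congr 1
  ext e
  simp [cliqueEdges, subset_iff, and_assoc, and_comm, and_left_comm]

theorem stmt_12_general (G : SimpleGraph V) {m : ℕ} (hm : 0 < m) {K : Finset V}
    (hK : G.IsClique ↑K) {H : SimpleGraph V} (hH : H.CliqueFreeOn ↑K (m + 1)) :
    #((cliqueEdges G K).filter (fun e => (e : Sym2 V) ∈ H.edgeSet)) +
      balancedCliqueEdges #K m ≤ #(cliqueEdges G K) := by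
  have cliqueFree_inter : ((G ⊓ H).induce (K : Set V)).CliqueFree (m + 1) :=
    (cliqueFree_induce_iff ..).mpr (hH.anti _ _ inf_le_right)
  rw [card_filter_cliqueEdges, card_cliqueEdges hK]
  simpa using card_edgeFinset_add_balancedCliqueEdges_le hm cliqueFree_inter

end CliqueEdges

/-- **Proposition 4.2.4**: for a clique `K` of `G` with `n = |V(K)|`, `α = ⌈n/m⌉`,
`n_{α-1} = mα - n`, `n_α = n - m(α-1)` and
`f(K,m) = n_{α-1}·(α-1)(α-2)/2 + n_α·α(α-1)/2`, the inequality
`Σ_{e ∈ E(K)} z_e ≤ |E(K)| - f(K,m)` is valid for `P_I(G,m)`: every feasible edge set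
`I` satisfies `|I ∩ E(K)| ≤ |E(K)| - f(K,m)`. -/
theorem stmt_12 {V : Type*} [Fintype V] (G : SimpleGraph V) (m : ℕ) (hm : 2 ≤ m)
    (K : Finset V) (hK : G.IsClique ↑K) :
    ∀ H : SimpleGraph V, FeasibleEdges G H m →
      ((cliqueEdges G K).filter (fun e => (e : Sym2 V) ∈ H.edgeSet)).card ≤
        (cliqueEdges G K).card -
          ((m * ((K.card + m - 1) / m) - K.card) *
              ((((K.card + m - 1) / m) - 1) * (((K.card + m - 1) / m) - 2) / 2) +
            (K.card - m * (((K.card + m - 1) / m) - 1)) *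
              ((((K.card + m - 1) / m)) * (((K.card + m - 1) / m) - 1) / 2)) :=
  fun _ hH => Nat.le_sub_of_add_le
    (stmt_12_general G (zero_lt_two.trans_le hm) hK hH.2.2.cliqueFreeOn)

end
end

section
/- Let v ∈ V. If ω_G(v) ≤ ℓ_opt(G, k), then v cannot belong to any minimal optimal interdiction policy, i.e., there is no W ⊆ V with |W| ≤ k, ω(G − W) = ℓ_opt(G, k), W minimal, and v ∈ W. -/
open Finset
open scoped Classical

noncomputable section

/-- The clique number `ω(G)` of a graph: the maximum size of a set of pairwise adjacent
vertices. -/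
def omega {W : Type*} (G : SimpleGraph W) : ℕ :=
  sSup {n | ∃ s : Finset W, G.IsNClique n s}

/-- `ω(G - W)`: the clique number of the subgraph of `G` induced on the complement of
`W`. -/
def omegaDel {W : Type*} (G : SimpleGraph W) (D : Finset W) : ℕ :=
  omega (G.induce ((↑D : Set W)ᶜ))

/-- `ℓ_opt(G,k)`: the optimal value of the maximum clique interdiction problem,
`min { ω(G - W) : W ⊆ V, |W| ≤ k }`. -/
def lopt {W : Type*} (G : SimpleGraph W) (k : ℕ) : ℕ :=
  sInf {q | ∃ D : Finset W, D.card ≤ k ∧ q = omegaDel G D}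

/-- `ω_G(v)`: the maximum size of a clique of `G` containing the vertex `v`. -/
def omegaAt {W : Type*} (G : SimpleGraph W) (v : W) : ℕ :=
  sSup {n | ∃ s : Finset W, G.IsNClique n s ∧ v ∈ s}

section CliqueNumbers

variable {V : Type*} {G : SimpleGraph V} {D s : Finset V} {m n k : ℕ} {v : V}

theorem bddAbove_isNClique_of_cliqueFree (hG : G.CliqueFree n) :
    BddAbove {m | ∃ s, G.IsNClique m s} := by
  refine ⟨n, fun m ⟨s, hs⟩ => ?_⟩
  by_contra! hnm
  exact hs.not_cliqueFree (hG.mono hnm.le)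

theorem le_omega (hG : G.CliqueFree n) (hs : G.IsNClique m s) : m ≤ omega G :=
  le_csSup (bddAbove_isNClique_of_cliqueFree hG) ⟨s, hs⟩

theorem le_omegaAt (hG : G.CliqueFree n) (hs : G.IsNClique m s) (hv : v ∈ s) :
    m ≤ omegaAt G v :=
  have hsub : {m | ∃ t, G.IsNClique m t ∧ v ∈ t} ⊆ {m | ∃ t, G.IsNClique m t} :=
    fun _ ⟨t, ht, _⟩ => ⟨t, ht⟩
  le_csSup ((bddAbove_isNClique_of_cliqueFree hG).mono hsub) ⟨s, hs, hv⟩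

theorem le_omegaDel (hG : G.CliqueFree n) (hs : G.IsNClique m s) (hsD : Disjoint s D) :
    m ≤ omegaDel G D := by
  have hGD : (G.induce (↑D : Set V)ᶜ).CliqueFree n :=
    (G.cliqueFree_induce_iff _ n).2 hG.cliqueFreeOn
  refine le_omega (s := s.subtype (· ∈ (↑D : Set V)ᶜ)) hGD ?_
  rw [SimpleGraph.isNClique_induce_iff, subtype_map_of_mem]
  · exact hs
  · exact fun x hx => disjoint_left.1 hsD hx

theorem exists_isNClique_omegaDel (G : SimpleGraph V) (D : Finset V) :
    ∃ s, G.IsNClique (omegaDel G D) s ∧ Disjoint s D := by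
  obtain ⟨t, ht⟩ := (G.induce (↑D : Set V)ᶜ).exists_isNClique_cliqueNum
  refine ⟨_, (G.isNClique_induce_iff _ t _).1 ht, disjoint_left.2 fun x hx => ?_⟩
  exact property_of_mem_map_subtype t hx

/-- A maximum clique of `G - (D ∖ {v})` either contains `v` or survives in `G - D`. -/
theorem omegaDel_erase_le_max (hG : G.CliqueFree n) (D : Finset V) (v : V) :
    omegaDel G (D.erase v) ≤ max (omegaDel G D) (omegaAt G v) := by
  obtain ⟨s, hs, hsD⟩ := exists_isNClique_omegaDel G (D.erase v)
  by_cases hv : v ∈ s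
  · exact le_max_of_le_right (le_omegaAt hG hs hv)
  · have hsD' : Disjoint s D := by
      rwa [← disjoint_erase_comm, erase_eq_of_notMem hv] at hsD
    exact le_max_of_le_left (le_omegaDel hG hs hsD')

theorem lopt_le_omegaDel (hD : D.card ≤ k) : lopt G k ≤ omegaDel G D :=
  Nat.sInf_le ⟨D, hD, rfl⟩

theorem stmt_15_general (hG : G.CliqueFree n) (hv : omegaAt G v ≤ lopt G k)
    {W : Finset V} (hW : W.card ≤ k)
    (hmin : ∀ u ∈ W, omegaDel G W < omegaDel G (W.erase u)) : v ∉ W := by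
  intro hvW
  have hle : omegaDel G (W.erase v) ≤ omegaDel G W :=
    calc omegaDel G (W.erase v)
        ≤ max (omegaDel G W) (omegaAt G v) := omegaDel_erase_le_max hG W v
      _ = omegaDel G W := max_eq_left (hv.trans (lopt_le_omegaDel hW))
  exact (hmin v hvW).not_ge hle

end CliqueNumbers

/-- **Proposition 5.2.3**: if `ω_G(v) ≤ ℓ_opt(G,k)`, then `v` cannot belong to any
minimal optimal interdiction policy. -/
theorem stmt_15 {V : Type*} [Fintype V] (G : SimpleGraph V) (k : ℕ) (hk : 0 < k)
    (v : V) (hv : omegaAt G v ≤ lopt G k) :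
    ¬ ∃ W : Finset V, W.card ≤ k ∧ omegaDel G W = lopt G k ∧
      (∀ u ∈ W, omegaDel G W < omegaDel G (W.erase u)) ∧ v ∈ W := by
  rintro ⟨W, hW, -, hmin, hvW⟩
  exact stmt_15_general (G.cliqueFree_of_card_lt (Nat.lt_succ_self _)) hv hW hmin hvW

end
end

section
/- If k ≥ 1, the polytope P(G, k) is full-dimensional, i.e., its affine span is all of ℝ^V × ℝ (dimension |V| + 1). -/
open Finset
open scoped Classical

noncomputable section

/-- The integer points of the clique interdiction polytope `P(G,k) ⊆ ℝ^V × ℝ`: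
pairs `(w, θ)` with `w ∈ {0,1}^V`, `θ ≥ 0`, `θ + Σ_{u∈K} w_u ≥ |K|` for every clique
`K` of `G`, and `Σ_{u∈V} w_u ≤ k`. -/
def cipSet {V : Type*} [Fintype V] (G : SimpleGraph V) (k : ℕ) : Set ((V → ℝ) × ℝ) :=
  {p | (∀ v, p.1 v = 0 ∨ p.1 v = 1) ∧ 0 ≤ p.2 ∧
    (∀ K : Finset V, G.IsClique ↑K → (K.card : ℝ) ≤ p.2 + ∑ u ∈ K, p.1 u) ∧
    (∑ v, p.1 v) ≤ (k : ℝ)}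

/-- The clique interdiction polytope `P(G,k)`. -/
def cipPoly {V : Type*} [Fintype V] (G : SimpleGraph V) (k : ℕ) : Set ((V → ℝ) × ℝ) :=
  convexHull ℝ (cipSet G k)

/-!
At height `θ ≥ ω(G)` every clique inequality holds for every 0/1 vector `w`. Since `k ≥ 1`, adding
any single standard basis vector of `ℝ^V × ℝ` to the point `(0, ω(G))` therefore gives another
feasible point, so the directions of the affine span contain a basis.
-/

theorem affineSpan_eq_top_of_forall_vadd_mem {ι R M P : Type*} [Ring R] [AddCommGroup M]
    [Module R M] [AddTorsor M P] {v : ι → M} (hv : Submodule.span R (Set.range v) = ⊤)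
    {s : Set P} {p : P} (hp : p ∈ s) (hvp : ∀ i, v i +ᵥ p ∈ s) : affineSpan R s = ⊤ := by
  have hsub : {p} ∪ (· +ᵥ p) '' Set.range v ⊆ s := by
    rintro _ (rfl | ⟨_, ⟨i, rfl⟩, rfl⟩)
    exacts [hp, hvp i]
  have htop : affineSpan R ({p} ∪ (· +ᵥ p) '' Set.range v) = ⊤ :=
    affineSpan_singleton_union_vadd_eq_top_of_span_eq_top p (by rwa [Subtype.range_coe])
  exact top_unique (htop.ge.trans (affineSpan_mono R hsub))

section CliqueInterdiction

variable {V : Type*} [Fintype V] {G : SimpleGraph V} {k : ℕ} {θ : ℝ}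

theorem mk_mem_cipSet_of_cliqueNum_le {w : V → ℝ} (hw : ∀ v, w v = 0 ∨ w v = 1)
    (hsum : ∑ v, w v ≤ k) (hθ : (G.cliqueNum : ℝ) ≤ θ) : (w, θ) ∈ cipSet G k := by
  refine ⟨hw, (Nat.cast_nonneg _).trans hθ, fun K hK => ?_, hsum⟩
  have hcard : (K.card : ℝ) ≤ θ := (Nat.cast_le.mpr hK.card_le_cliqueNum).trans hθ
  have hnonneg : 0 ≤ ∑ u ∈ K, w u :=
    sum_nonneg fun u _ => (hw u).elim (fun h => h.ge) (fun h => h ▸ zero_le_one)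
  exact le_add_of_le_of_nonneg hcard hnonneg

theorem zero_mk_mem_cipSet (hθ : (G.cliqueNum : ℝ) ≤ θ) : ((0 : V → ℝ), θ) ∈ cipSet G k :=
  mk_mem_cipSet_of_cliqueNum_le (fun _ => Or.inl rfl) (by simp) hθ

theorem single_mk_mem_cipSet (hk : 1 ≤ k) (v : V) (hθ : (G.cliqueNum : ℝ) ≤ θ) :
    (Pi.single v (1 : ℝ), θ) ∈ cipSet G k := by
  refine mk_mem_cipSet_of_cliqueNum_le (fun u => ?_) (by simpa using hk) hθ
  obtain rfl | huv := eq_or_ne u v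
  · exact Or.inr (Pi.single_eq_same _ _)
  · exact Or.inl (Pi.single_eq_of_ne huv _)

end CliqueInterdiction

/-- **Proposition 5.4.1**: for `k ≥ 1`, the polytope `P(G,k)` is full-dimensional:
its affine span is all of `ℝ^V × ℝ`. -/
theorem stmt_17 {V : Type*} [Fintype V] (G : SimpleGraph V) (k : ℕ) (hk : 1 ≤ k) :
    affineSpan ℝ (cipPoly G k) = ⊤ := by
  rw [cipPoly, affineSpan_convexHull]
  let b := (Pi.basisFun ℝ V).prod (Module.Basis.singleton Unit ℝ)
  have hbase : ((0 : V → ℝ), (G.cliqueNum : ℝ)) ∈ cipSet G k := zero_mk_mem_cipSet le_rfl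
  refine affineSpan_eq_top_of_forall_vadd_mem b.span_eq hbase ?_
  rintro (v | _)
  · simpa [b] using single_mk_mem_cipSet hk v le_rfl
  · have hup : ((0 : V → ℝ), 1 + (G.cliqueNum : ℝ)) ∈ cipSet G k :=
      zero_mk_mem_cipSet (le_add_of_nonneg_left zero_le_one)
    simpa [b] using hup

end
end

section
/- Assume k ≥ 1 and |V| ≥ 2, and let u ∈ V. Then: (1) the trivial inequality w_u ≤ 1 defines a facet of P(G, k) if and only if k ≥ 2; (2) the trivial inequality w_u ≥ 0 defines a facet of P(G, k). -/
open Finset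
open scoped Classical

noncomputable section

/-!
A clique has at most `|V|` vertices, so once `θ ≥ |V|` the clique constraints hold for every `w`.
Hence `P(G, k)` projects onto the polytope `Q` of 0/1 vectors of weight at most `k` and contains
`Q × [|V|, ∞)`: a face cut out by a condition on `w` alone has one dimension more than the
corresponding face of `Q`, and the graph plays no role. In `Q`, the base point `0` with its
neighbours `e_v` spans the whole space, and spans the face `w_u = 0` when `v = u` is left out. For
`k ≥ 2` the base point `e_u` with its neighbours `e_u + e_v` likewise spans the face `w_u = 1`,
while for `k = 1` that face is the single point `e_u`, too small when `|V| ≥ 2`.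
-/

section VectorSpan

variable {R ι : Type*} [Ring R] [Finite ι] [DecidableEq ι] {S : Set (ι → R)} {w : ι → R}

theorem mem_vectorSpan_of_add_single_mem {I : Set ι} (hw : w ∈ S)
    (hI : ∀ i ∈ I, w + Pi.single i 1 ∈ S) {x : ι → R} (hx : ∀ i ∉ I, x i = 0) :
    x ∈ vectorSpan R S := by
  have hsingle (i : ι) : Pi.single i (x i) ∈ vectorSpan R S := by
    by_cases hi : i ∈ I
    · have hone : Pi.single i 1 ∈ vectorSpan R S := by
        simpa using vsub_mem_vectorSpan R (hI i hi) hw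
      simpa [← Pi.single_smul] using (vectorSpan R S).smul_mem (x i) hone
    · simp [hx i hi]
  cases nonempty_fintype ι
  rw [← Finset.univ_sum_single x]
  exact Submodule.sum_mem _ fun i _ => hsingle i

theorem vectorSpan_eq_top_of_add_single_mem (hw : w ∈ S)
    (hS : ∀ i, w + Pi.single i 1 ∈ S) : vectorSpan R S = ⊤ :=
  (Submodule.eq_top_iff').2 fun _ =>
    mem_vectorSpan_of_add_single_mem (I := Set.univ) hw (fun i _ => hS i) (by simp)

theorem vectorSpan_sep_apply_eq_of_add_single_mem {i : ι} {c : R} (hw : w ∈ S) (hwi : w i = c)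
    (hS : ∀ j ≠ i, w + Pi.single j 1 ∈ S) :
    vectorSpan R {x ∈ S | x i = c} = LinearMap.ker (LinearMap.proj (φ := fun _ => R) i) := by
  refine le_antisymm ?_ fun x hx => ?_
  · rw [vectorSpan, Submodule.span_le]
    rintro _ ⟨x, ⟨-, hx⟩, y, ⟨-, hy⟩, rfl⟩
    simp [hx, hy]
  · have hwS : w ∈ {x ∈ S | x i = c} := ⟨hw, hwi⟩
    refine mem_vectorSpan_of_add_single_mem (I := {i}ᶜ) hwS (fun j (hj : j ≠ i) => ?_) ?_
    · exact ⟨hS j hj, by simp [hwi, hj.symm]⟩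
    · simpa using hx

end VectorSpan

theorem finrank_ker_proj_add_one {K ι : Type*} [Field K] [Fintype ι] (i : ι) :
    Module.finrank K (LinearMap.ker (LinearMap.proj (R := K) (φ := fun _ => K) i)) + 1 =
      Fintype.card ι := by
  rw [Module.Dual.finrank_ker_add_one_of_ne_zero, Module.finrank_fintype_fun_eq_card]
  intro h
  simpa using LinearMap.congr_fun h 1

section UpwardClosed

variable {R E : Type*} [Ring R] [PartialOrder R] [IsOrderedRing R] [AddCommGroup E] [Module R E]

theorem vectorSpan_Ici (t : R) : vectorSpan R (Set.Ici t) = ⊤ := by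
  have hone : (1 : R) ∈ vectorSpan R (Set.Ici t) := by
    simpa using vsub_mem_vectorSpan R (s := Set.Ici t) (p₁ := t + 1) (p₂ := t) (by simp) (by simp)
  exact Submodule.eq_top_iff'.2 fun c => by simpa using Submodule.smul_mem _ c hone

theorem vectorSpan_eq_prod_top_of_prod_Ici_subset {A : Set E} {Q : Set (E × R)} {t : R}
    (hA : A.Nonempty) (hAQ : A ×ˢ Set.Ici t ⊆ Q) (hQA : Q ⊆ Prod.fst ⁻¹' A) :
    vectorSpan R Q = (vectorSpan R A).prod ⊤ := by
  apply le_antisymm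
  · calc vectorSpan R Q ≤ vectorSpan R (A ×ˢ (Set.univ : Set R)) :=
          vectorSpan_mono R fun _ hp => ⟨hQA hp, trivial⟩
      _ ≤ (vectorSpan R A).prod (vectorSpan R Set.univ) := vectorSpan_prod_le _ _
      _ ≤ (vectorSpan R A).prod ⊤ := Submodule.prod_mono le_rfl le_top
  · rw [← vectorSpan_Ici t, ← vectorSpan_prod_eq hA Set.nonempty_Ici]
    exact vectorSpan_mono R hAQ

end UpwardClosed

theorem finrank_submodule_prod {K E F : Type*} [DivisionRing K] [AddCommGroup E] [Module K E]
    [AddCommGroup F] [Module K F] (W : Submodule K E) (W' : Submodule K F)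
    [FiniteDimensional K W] [FiniteDimensional K W'] :
    Module.finrank K (W.prod W') = Module.finrank K W + Module.finrank K W' := by
  have hrange : LinearMap.range (W.subtype.prodMap W'.subtype) = W.prod W' := by
    simp [LinearMap.range_prodMap]
  rw [← hrange, LinearMap.finrank_range_of_inj, Module.finrank_prod]
  exact W.subtype_injective.prodMap W'.subtype_injective

theorem eq_single_of_sum_le_apply {ι M : Type*} [Fintype ι] [DecidableEq ι] [AddCommGroup M]
    [PartialOrder M] [IsOrderedAddMonoid M] {w : ι → M} {i : ι} (hw : 0 ≤ w)
    (hsum : ∑ j, w j ≤ w i) : w = Pi.single i (w i) := by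
  have hrest : ∑ j ∈ univ.erase i, w j = 0 := by
    refine le_antisymm ?_ (sum_nonneg fun j _ => hw j)
    rwa [← add_sum_erase univ w (mem_univ i), add_le_iff_nonpos_right] at hsum
  rw [sum_eq_zero_iff_of_nonneg fun j _ => hw j] at hrest
  ext j
  obtain rfl | hj := eq_or_ne j i
  · simp
  · simp [hj, hrest j (by simp [hj])]

/-- The interdiction policies: 0/1 vectors spending at most the budget `k`. They are the
`w`-components of the points of `cipSet G k`, whatever the graph `G`. -/
def policySet (V : Type*) [Fintype V] (k : ℕ) : Set (V → ℝ) :=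
  {w | (∀ v, w v = 0 ∨ w v = 1) ∧ ∑ v, w v ≤ k}

/-- The policy polytope, the projection of `cipPoly G k` to the `w`-coordinates. -/
def policyPoly (V : Type*) [Fintype V] (k : ℕ) : Set (V → ℝ) :=
  convexHull ℝ (policySet V k)

section Policy

variable {V : Type*} [Fintype V] {j k : ℕ} {w : V → ℝ} {v : V}

theorem policySet_subset_policyPoly : policySet V k ⊆ policyPoly V k :=
  subset_convexHull ℝ _

theorem zero_mem_policySet : 0 ∈ policySet V k := by
  simp [policySet]

theorem add_single_mem_policySet (hw : w ∈ policySet V j) (hv : w v = 0) (hjk : j < k) :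
    w + Pi.single v 1 ∈ policySet V k := by
  refine ⟨fun i => ?_, ?_⟩
  · obtain rfl | hi := eq_or_ne i v
    · simp [hv]
    · simpa [hi] using hw.1 i
  · have hjk' : (j : ℝ) + 1 ≤ k := by exact_mod_cast hjk
    simpa [sum_add_distrib] using (add_le_add_left hw.2 1).trans hjk'

theorem single_mem_policySet (hk : 1 ≤ k) : Pi.single v 1 ∈ policySet V k := by
  simpa using add_single_mem_policySet (v := v) (zero_mem_policySet (k := 0)) rfl hk

theorem policyPoly_subset : policyPoly V k ⊆ Set.Icc 0 1 ∩ {w | ∑ v, w v ≤ k} := by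
  refine convexHull_min ?_ ((convex_Icc 0 1).inter (convex_halfSpace_le ?_ _))
  · rintro w ⟨hw, hsum⟩
    refine ⟨⟨fun v => ?_, fun v => ?_⟩, hsum⟩ <;> obtain h | h := hw v <;> simp [h]
  · exact ⟨fun w w' => by simp [sum_add_distrib], fun c w => by simp [mul_sum]⟩

theorem finrank_vectorSpan_policyPoly (hk : 1 ≤ k) :
    Module.finrank ℝ (vectorSpan ℝ (policyPoly V k)) = Fintype.card V := by
  rw [vectorSpan_eq_top_of_add_single_mem (policySet_subset_policyPoly zero_mem_policySet),
    finrank_top, Module.finrank_fintype_fun_eq_card]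
  exact fun v => policySet_subset_policyPoly <| by simpa using single_mem_policySet hk

theorem finrank_vectorSpan_policyPoly_apply_eq_zero (hk : 1 ≤ k) (u : V) :
    Module.finrank ℝ (vectorSpan ℝ {w ∈ policyPoly V k | w u = 0}) + 1 = Fintype.card V := by
  rw [vectorSpan_sep_apply_eq_of_add_single_mem (policySet_subset_policyPoly zero_mem_policySet)
    (Pi.zero_apply u), finrank_ker_proj_add_one]
  exact fun v _ => policySet_subset_policyPoly <| by simpa using single_mem_policySet hk

theorem finrank_vectorSpan_policyPoly_apply_eq_one (hk : 2 ≤ k) (u : V) :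
    Module.finrank ℝ (vectorSpan ℝ {w ∈ policyPoly V k | w u = 1}) + 1 = Fintype.card V := by
  rw [vectorSpan_sep_apply_eq_of_add_single_mem
    (policySet_subset_policyPoly (single_mem_policySet (one_le_two.trans hk)))
    (Pi.single_eq_same u 1), finrank_ker_proj_add_one]
  exact fun v hv => policySet_subset_policyPoly <|
    add_single_mem_policySet (single_mem_policySet le_rfl) (Pi.single_eq_of_ne hv 1) hk

theorem subsingleton_policyPoly_one_apply_eq_one (u : V) :
    {w ∈ policyPoly V 1 | w u = 1}.Subsingleton := by
  have eq_single {w} (hw : w ∈ policyPoly V 1) (hwu : w u = 1) : w = Pi.single u 1 := by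
    obtain ⟨⟨hnonneg, -⟩, hsum⟩ := policyPoly_subset hw
    rw [← hwu]
    exact eq_single_of_sum_le_apply hnonneg (by simpa [hwu] using hsum)
  rintro w ⟨hw, hwu⟩ w' ⟨hw', hwu'⟩
  rw [eq_single hw hwu, eq_single hw' hwu']

end Policy

theorem policySet_prod_Ici_subset_cipSet {V : Type*} [Fintype V] (G : SimpleGraph V) (k : ℕ) :
    policySet V k ×ˢ Set.Ici (Fintype.card V : ℝ) ⊆ cipSet G k := by
  rintro ⟨w, t⟩ ⟨⟨hbin, hsum⟩, ht : (Fintype.card V : ℝ) ≤ t⟩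
  refine ⟨hbin, (Nat.cast_nonneg _).trans ht, fun K _ => ?_, hsum⟩
  have hcard : (#K : ℝ) ≤ Fintype.card V := by exact_mod_cast card_le_univ K
  have hnonneg : 0 ≤ ∑ v ∈ K, w v := sum_nonneg fun v _ => by
    obtain h | h : w v = 0 ∨ w v = 1 := hbin v <;> simp [h]
  exact (hcard.trans ht).trans (le_add_of_nonneg_right hnonneg)

namespace cipPoly

variable {V : Type*} [Fintype V] {G : SimpleGraph V} {k : ℕ}

theorem fst_mem_policyPoly {p : (V → ℝ) × ℝ} (hp : p ∈ cipPoly G k) : p.1 ∈ policyPoly V k := by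
  have hfst : p.1 ∈ convexHull ℝ (LinearMap.fst ℝ (V → ℝ) ℝ '' cipSet G k) := by
    rw [← LinearMap.image_convexHull]
    exact Set.mem_image_of_mem _ hp
  refine convexHull_mono ?_ hfst
  rintro _ ⟨q, ⟨hbin, -, -, hsum⟩, rfl⟩
  exact ⟨hbin, hsum⟩

theorem policyPoly_prod_Ici_subset :
    policyPoly V k ×ˢ Set.Ici (Fintype.card V : ℝ) ⊆ cipPoly G k := by
  rw [policyPoly, ← (convex_Ici (𝕜 := ℝ) (Fintype.card V : ℝ)).convexHull_eq, ← convexHull_prod]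
  exact convexHull_mono (policySet_prod_Ici_subset_cipSet G k)

theorem finrank_vectorSpan_sep_fst {φ : (V → ℝ) → Prop} (hφ : ∃ w ∈ policyPoly V k, φ w) :
    Module.finrank ℝ (vectorSpan ℝ {p ∈ cipPoly G k | φ p.1}) =
      Module.finrank ℝ (vectorSpan ℝ {w ∈ policyPoly V k | φ w}) + 1 := by
  rw [vectorSpan_eq_prod_top_of_prod_Ici_subset (A := {w ∈ policyPoly V k | φ w})
    (t := (Fintype.card V : ℝ)) hφ, finrank_submodule_prod, finrank_top, Module.finrank_self]
  · rintro p ⟨⟨hp, hφp⟩, ht⟩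
    exact ⟨policyPoly_prod_Ici_subset ⟨hp, ht⟩, hφp⟩
  · rintro p ⟨hp, hφp⟩
    exact ⟨fst_mem_policyPoly hp, hφp⟩

theorem finrank_vectorSpan (hk : 1 ≤ k) :
    Module.finrank ℝ (vectorSpan ℝ (cipPoly G k)) = Fintype.card V + 1 := by
  have h := finrank_vectorSpan_sep_fst (G := G) (k := k) (φ := fun _ => True)
    ⟨0, policySet_subset_policyPoly zero_mem_policySet, trivial⟩
  rwa [Set.sep_true, Set.sep_true, finrank_vectorSpan_policyPoly hk] at h

theorem finrank_vectorSpan_apply_eq_zero (u : V) :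
    Module.finrank ℝ (vectorSpan ℝ {p ∈ cipPoly G k | p.1 u = 0}) =
      Module.finrank ℝ (vectorSpan ℝ {w ∈ policyPoly V k | w u = 0}) + 1 :=
  finrank_vectorSpan_sep_fst (φ := fun w => w u = 0)
    ⟨0, policySet_subset_policyPoly zero_mem_policySet, rfl⟩

theorem finrank_vectorSpan_apply_eq_one (hk : 1 ≤ k) (u : V) :
    Module.finrank ℝ (vectorSpan ℝ {p ∈ cipPoly G k | p.1 u = 1}) =
      Module.finrank ℝ (vectorSpan ℝ {w ∈ policyPoly V k | w u = 1}) + 1 :=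
  finrank_vectorSpan_sep_fst (φ := fun w => w u = 1)
    ⟨Pi.single u 1, policySet_subset_policyPoly (single_mem_policySet hk), by simp⟩

end cipPoly

/-- **Proposition 5.4.2**: assume `k ≥ 1` and `|V| ≥ 2`, and let `u ∈ V`. Then
(1) the trivial inequality `w_u ≤ 1` defines a facet of `P(G,k)` iff `k ≥ 2`;
(2) the trivial inequality `w_u ≥ 0` defines a facet of `P(G,k)`. -/
theorem stmt_18 {V : Type*} [Fintype V] (G : SimpleGraph V) (k : ℕ) (hk : 1 ≤ k)
    (hV : 2 ≤ Fintype.card V) (u : V) :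
    (((∀ p ∈ cipPoly G k, p.1 u ≤ 1) ∧
        Module.finrank ℝ
            (affineSpan ℝ {p ∈ cipPoly G k | p.1 u = 1}).direction + 1 =
          Module.finrank ℝ (affineSpan ℝ (cipPoly G k)).direction) ↔ 2 ≤ k) ∧
    ((∀ p ∈ cipPoly G k, 0 ≤ p.1 u) ∧
      Module.finrank ℝ
          (affineSpan ℝ {p ∈ cipPoly G k | p.1 u = 0}).direction + 1 =
        Module.finrank ℝ (affineSpan ℝ (cipPoly G k)).direction) := by
  have bounds {p} (hp : p ∈ cipPoly G k) : 0 ≤ p.1 u ∧ p.1 u ≤ 1 :=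
    let ⟨⟨hzero, hone⟩, _⟩ := policyPoly_subset (cipPoly.fst_mem_policyPoly hp)
    ⟨hzero u, hone u⟩
  rw [direction_affineSpan, direction_affineSpan, direction_affineSpan,
    cipPoly.finrank_vectorSpan hk, cipPoly.finrank_vectorSpan_apply_eq_zero,
    cipPoly.finrank_vectorSpan_apply_eq_one hk, Nat.add_right_cancel_iff,
    Nat.add_right_cancel_iff]
  refine ⟨⟨fun ⟨_, hfacet⟩ => ?_, fun hk₂ => ⟨fun p hp => (bounds hp).2, ?_⟩⟩,
    fun p hp => (bounds hp).1, finrank_vectorSpan_policyPoly_apply_eq_zero hk u⟩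
  · by_contra! hk₂
    obtain rfl : k = 1 := by omega
    rw [vectorSpan_of_subsingleton ℝ (subsingleton_policyPoly_one_apply_eq_one u),
      finrank_bot] at hfacet
    omega
  · exact finrank_vectorSpan_policyPoly_apply_eq_one hk₂ u

end
end
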